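/- Fix integers p ≥ 2 and 0 ≤ d < 2p−2. Let 𝒜 be the symmetric (d+2)×(d+2) integer matrix with rows/columns indexed by {+, −, 0, 1, ..., d−1}, with entries 𝒜_{++} = 𝒜_{−−} = p, 𝒜_{+−} = −p+d+1, 𝒜_{±,j} = j+1 for 0 ≤ j ≤ d−1, and 𝒜_{ij} = 2·min(i+1, j+1) for 0 ≤ i,j ≤ d−1. Let N = (N_+, N_−; N_0, ..., N_{d−1}) ∈ ℤ^{d+2}, set N' = (N_0, ..., N_{d−1}, N_+ + N_−), and let L = N' · T_{d+1} where T_m is the tridiagonal matrix with 2's on the diagonal (except last entry 1) and −1's off-diagonal, so that (T_m⁻¹)_{ij} = min(i,j). Suppose L_i ≥ 0 for all i. Then Σ_{n ∈ ℤ^{d+2}} z^{n_+ − n_−} q^{(1/2) n 𝒜 nᵀ} Π_{a} [e_a·(N + n − n𝒜), e_a·n]⁺_q = Σ_{a ∈ ℤ} z^a q^{p a²/2} S^{(d+2)}(L, pa + N_−)_q, where S denotes the q-supernomial coefficient, and both sides are well-defined finite sums. -/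

import Mathlib

noncomputable section

/-- The ring `ℤ[q^{1/2}, q^{-1/2}, z, z^{-1}]`: the monomial `(a,b)` stands for
`q^{a/2} z^b`. -/
abbrev LL := AddMonoidAlgebra ℤ (ℤ × ℤ)

/-- `Qh a = q^{a/2}`. -/
def Qh (a : ℤ) : LL := AddMonoidAlgebra.single (a, 0) 1

/-- `Zv b = z^b`. -/
def Zv (b : ℤ) : LL := AddMonoidAlgebra.single (0, b) 1

def gaussRecL (v : LL) : ℕ → ℕ → LL
  | 0, 0 => 1
  | 0, _ + 1 => 0
  | _ + 1, 0 => 1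
  | n + 1, m + 1 => gaussRecL v n (m + 1) * v ^ (m + 1) + gaussRecL v n m

def gaussZL (v : LL) (n m : ℤ) : LL :=
  if 0 ≤ m ∧ m ≤ n then gaussRecL v n.toNat m.toNat else 0

/-- The Gaussian binomial `[n m]_q`, with `q = Qh 2`. -/
def qbinL (n m : ℤ) : LL := gaussZL (Qh 2) n m

/-- The extended q-binomial `[n m]⁺_q`. -/
def qbinPlusL (n m : ℤ) : LL :=
  if 0 ≤ n then qbinL n m
  else (-1) ^ (n - m).natAbs * Qh (-((n - m) ^ 2 + (n - m))) *
    gaussZL (Qh (-2)) (-m - 1) (-n - 1)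


/-- The symmetric `(d+2) × (d+2)` matrix `𝒜`, with indices `0 ↦ +`, `1 ↦ −`,
`i+2 ↦ i` for `0 ≤ i ≤ d-1`. -/
def Amat (p d : ℕ) : Matrix (Fin (d + 2)) (Fin (d + 2)) ℤ := fun i j =>
  if (i : ℕ) = 0 ∧ (j : ℕ) = 0 then (p : ℤ)
  else if (i : ℕ) = 1 ∧ (j : ℕ) = 1 then (p : ℤ)
  else if ((i : ℕ) = 0 ∧ (j : ℕ) = 1) ∨ ((i : ℕ) = 1 ∧ (j : ℕ) = 0) then -(p : ℤ) + d + 1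
  else if (i : ℕ) ≤ 1 then (j : ℤ) - 1
  else if (j : ℕ) ≤ 1 then (i : ℤ) - 1
  else 2 * min ((i : ℤ) - 1) ((j : ℤ) - 1)

/-- The tridiagonal matrix `T_m` with diagonal `(2, ..., 2, 1)` and `-1` on the
off-diagonals, so that `(T_m⁻¹)_{ij} = min(i,j)`. -/
def Tmat (m : ℕ) : Matrix (Fin m) (Fin m) ℤ := fun i j =>
  if i = j then (if (i : ℕ) = m - 1 then 1 else 2)
  else if (i : ℕ) + 1 = (j : ℕ) ∨ (j : ℕ) + 1 = (i : ℕ) then -1 else 0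

/-- `N' = (N_0, ..., N_{d-1}, N_+ + N_-)`. -/
def Nprime (d : ℕ) (N : Fin (d + 2) → ℤ) : Fin (d + 1) → ℤ := fun i =>
  if h : (i : ℕ) < d then N ⟨(i : ℕ) + 2, by omega⟩ else N 0 + N 1

/-- `L = N' T_{d+1}` (as a row vector times the matrix); `Lvec d N j` is `L_{j+1}`. -/
def Lvec (d : ℕ) (N : Fin (d + 2) → ℤ) : Fin (d + 1) → ℤ := fun j =>
  ∑ i, Nprime d N i * Tmat (d + 1) i j

/-- `(n𝒜)_a = Σ_j n_j 𝒜_{ja}`. -/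
def rowA (p d : ℕ) (n : Fin (d + 2) → ℤ) (a : Fin (d + 2)) : ℤ :=
  ∑ j, n j * Amat p d j a

/-- The q-supernomial coefficient `S^{(k+1)}(L, a)` with `q = Qh 2`, for an integer
vector `L` (the Gaussian binomials vanish on negative tops). -/
def qSupL {k : ℕ} (L : Fin k → ℤ) (a : ℤ) : LL :=
  ∑ᶠ n : Fin k → ℤ,
    if (∑ i, n i) = a then
      Qh (2 * ∑ i : Fin k,
          if hi : (i : ℕ) + 1 < k then
            n i * (-(n ⟨(i : ℕ) + 1, hi⟩) +
              ∑ j ∈ Finset.univ.filter (fun j : Fin k => i < j), L j)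
          else 0) *
        ∏ i : Fin k,
          qbinL (L i + (if hi : (i : ℕ) + 1 < k then n ⟨(i : ℕ) + 1, hi⟩ else 0)) (n i)
    else 0

/-!
Both sides obey the same reductions. Write `F(N)` for the left-hand side and `𝒜₊` for the row of
`𝒜` indexed by `+`. The Pascal rule applied to the binomial of the coordinate `+` gives
`F(N) = F(N - e₊) + z q^{N₊ - p/2} F(N - 𝒜₊)`, and a recurrence for `q`-supernomials gives the same
relation on the right. Each of the two shifts of `N` lowers `L_{d+1}` by one, so that one may assume
`L_{d+1} = 0`, that is, `N_{d-1} = N₊ + N₋`. In that case the sum over `n_{d-1}` can be evaluated by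
the linking identity
`∑_k q^{(i-k)(j-k)} [X-j, i-k]⁺ [Y-i, j-k]⁺ [X+Y-i-j+k, k]⁺ = [X, i]⁺ [Y, j]⁺`,
which lowers `d` by one. For `d = 0` the claim is the `q`-Vandermonde identity.
-/

section Monomials

theorem Qh_zero : Qh 0 = 1 := rfl

theorem Qh_add (a b : ℤ) : Qh (a + b) = Qh a * Qh b := by
  simp [Qh, AddMonoidAlgebra.single_mul_single]

theorem Zv_add (a b : ℤ) : Zv (a + b) = Zv a * Zv b := by
  simp [Zv, AddMonoidAlgebra.single_mul_single]

theorem Qh_mul_Qh {a b c : ℤ} (h : a + b = c) : Qh a * Qh b = Qh c := by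
  rw [← Qh_add, h]

theorem Qh_pow (a : ℤ) (n : ℕ) : Qh a ^ n = Qh (a * n) := by
  simp [Qh, AddMonoidAlgebra.single_pow, mul_comm]

theorem Qh_injective : Function.Injective Qh := fun a b h => by
  simpa using (AddMonoidAlgebra.single_left_inj (one_ne_zero (α := ℤ))).1 h

theorem isUnit_Qh (a : ℤ) : IsUnit (Qh a) :=
  IsUnit.of_mul_eq_one (Qh (-a)) (by rw [← Qh_add, add_neg_cancel, Qh_zero])

theorem one_sub_Qh_ne_zero {a : ℤ} (ha : a ≠ 0) : 1 - Qh a ≠ 0 := by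
  rw [sub_ne_zero, ← Qh_zero]
  exact Qh_injective.ne ha.symm

end Monomials

section GaussianBinomial

theorem gaussRecL_zero_right (v : LL) (n : ℕ) : gaussRecL v n 0 = 1 := by
  cases n <;> rfl

theorem gaussRecL_eq_zero_of_lt (v : LL) {n m : ℕ} (h : n < m) : gaussRecL v n m = 0 := by
  induction n generalizing m with
  | zero => obtain ⟨m, rfl⟩ := Nat.exists_eq_add_of_lt h; simp [gaussRecL]
  | succ n ih =>
    obtain ⟨m, rfl⟩ : ∃ k, m = k + 1 := ⟨m - 1, by lia⟩
    simp [gaussRecL, ih (m := m) (by lia), ih (m := m + 1) (by lia)]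

theorem gaussZL_natCast (v : LL) (n m : ℕ) : gaussZL v n m = gaussRecL v n m := by
  unfold gaussZL
  split_ifs with h
  · simp
  · rw [gaussRecL_eq_zero_of_lt v (by lia)]

theorem gaussZL_eq_zero (v : LL) {n m : ℤ} (h : m < 0 ∨ n < m) : gaussZL v n m = 0 :=
  if_neg (by lia)

theorem gaussZL_zero_right (v : LL) {n : ℤ} (hn : 0 ≤ n) : gaussZL v n 0 = 1 := by
  lift n to ℕ using hn
  exact_mod_cast (gaussZL_natCast v n 0).trans (gaussRecL_zero_right v n)

theorem gaussZL_zero_left (v : LL) (m : ℤ) : gaussZL v 0 m = if m = 0 then 1 else 0 := by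
  split_ifs with h
  · rw [h, gaussZL_zero_right v le_rfl]
  · exact gaussZL_eq_zero v (by lia)

theorem gaussZL_self (v : LL) {n : ℤ} (hn : 0 ≤ n) : gaussZL v n n = 1 := by
  lift n to ℕ using hn
  rw [gaussZL_natCast]
  induction n with
  | zero => rfl
  | succ n ih => rw [gaussRecL, ih, gaussRecL_eq_zero_of_lt v n.lt_succ_self, zero_mul, zero_add]

theorem gaussZL_add_one (c : ℤ) {n m : ℤ} (h : n ≠ -1 ∨ m ≠ 0) :
    gaussZL (Qh c) (n + 1) m = Qh (c * m) * gaussZL (Qh c) n m + gaussZL (Qh c) n (m - 1) := by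
  by_cases hm : 0 < m ∧ 0 ≤ n
  · obtain ⟨k, rfl⟩ : ∃ k : ℕ, m = k + 1 := ⟨(m - 1).toNat, by lia⟩
    lift n to ℕ using hm.2
    rw [add_sub_cancel_right]
    norm_cast
    rw [gaussZL_natCast, gaussZL_natCast, gaussZL_natCast, gaussRecL, Qh_pow, mul_comm]
  · rcases eq_or_ne m 0 with rfl | hm0
    · rw [gaussZL_eq_zero (m := 0 - 1) _ (by lia), mul_zero, Qh_zero, one_mul, add_zero]
      rcases lt_or_ge n 0 with hn | hn
      · rw [gaussZL_eq_zero _ (by lia), gaussZL_eq_zero _ (by lia)]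
      · rw [gaussZL_zero_right _ (by lia), gaussZL_zero_right _ hn]
    · rw [gaussZL_eq_zero _ (by lia), gaussZL_eq_zero _ (by lia), gaussZL_eq_zero _ (by lia),
        mul_zero, add_zero]

theorem gaussZL_add_one' (c : ℤ) {n m : ℤ} (h : n ≠ -1 ∨ m ≠ 0) :
    gaussZL (Qh c) (n + 1) m =
      gaussZL (Qh c) n m + Qh (c * (n + 1 - m)) * gaussZL (Qh c) n (m - 1) := by
  rcases lt_or_ge n 0 with hn | hn
  · rw [gaussZL_eq_zero _ (by lia), gaussZL_eq_zero _ (by lia), gaussZL_eq_zero _ (by lia),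
      mul_zero, add_zero]
  lift n to ℕ using hn
  clear h
  induction n generalizing m with
  | zero =>
    rw [gaussZL_add_one c (by lia)]
    simp only [Nat.cast_zero, gaussZL_zero_left, mul_ite, mul_one, mul_zero]
    split_ifs with h h' h'
    · lia
    · simp [h, Qh_zero]
    · simp [show m = 1 by lia, Qh_zero]
    · rfl
  | succ n ih =>
    rw [gaussZL_add_one c (by lia)]
    push_cast
    have hcomm : Qh (c * (n + 1 + 1 - m)) * Qh (c * (m - 1)) = Qh (c * m) * Qh (c * (n + 1 - m)) :=
      by rw [← Qh_add, ← Qh_add]; congr 1; ring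
    have ih' := ih (m := m - 1)
    rw [show (n : ℤ) + 1 - (m - 1) = n + 1 + 1 - m by ring] at ih'
    linear_combination Qh (c * m) * ih (m := m) + ih' -
      gaussZL_add_one c (n := n) (m := m) (by lia) -
      Qh (c * (n + 1 + 1 - m)) * gaussZL_add_one c (n := n) (m := m - 1) (by lia) -
      gaussZL (Qh c) n (m - 1) * hcomm

theorem gaussZL_sub_right (c : ℤ) {n : ℤ} (hn : 0 ≤ n) (m : ℤ) :
    gaussZL (Qh c) n (n - m) = gaussZL (Qh c) n m := by
  lift n to ℕ using hn
  induction n generalizing m with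
  | zero => simp [gaussZL_zero_left]
  | succ n ih =>
    push_cast
    rw [gaussZL_add_one c (by lia), gaussZL_add_one' c (by lia), ← ih m, ← ih (m - 1),
      show (n : ℤ) + 1 - m - 1 = n - m by ring, show (n : ℤ) - (m - 1) = n + 1 - m by ring,
      add_comm]

end GaussianBinomial

section ExtendedBinomial

theorem neg_one_pow_natAbs_add_one {R : Type*} [Ring R] (e : ℤ) :
    (-1 : R) ^ (e + 1).natAbs = -(-1) ^ e.natAbs := by
  rcases Int.even_or_odd e with h | h
  · rw [(Int.natAbs_even.2 h).neg_one_pow, (Int.natAbs_odd.2 h.add_one).neg_one_pow]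
  · rw [(Int.natAbs_odd.2 h).neg_one_pow, (Int.natAbs_even.2 h.add_one).neg_one_pow, neg_neg]

theorem qbinPlusL_eq_qbinL {n m : ℤ} (h : 0 ≤ n ∨ 0 ≤ m) : qbinPlusL n m = qbinL n m := by
  unfold qbinPlusL
  split_ifs with hn
  · rfl
  · rw [gaussZL_eq_zero _ (by lia), qbinL, gaussZL_eq_zero _ (by lia), mul_zero]

theorem qbinPlusL_eq_neg_one_pow_mul {n m : ℤ} (h : n < 0 ∨ m < 0) :
    qbinPlusL n m = (-1) ^ (n - m).natAbs * Qh (-((n - m) ^ 2 + (n - m))) *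
      gaussZL (Qh (-2)) (-m - 1) (-n - 1) := by
  unfold qbinPlusL
  split_ifs with hn
  · rw [qbinL, gaussZL_eq_zero _ (by lia), gaussZL_eq_zero _ (by lia), mul_zero]
  · rfl

theorem le_and_nonneg_or_neg_of_qbinPlusL_ne_zero {n m : ℤ} (h : qbinPlusL n m ≠ 0) :
    m ≤ n ∧ (0 ≤ m ∨ n < 0) := by
  contrapose! h
  rcases lt_or_ge n 0 with hn | hn
  · rw [qbinPlusL_eq_neg_one_pow_mul (.inl hn), gaussZL_eq_zero _ (by lia), mul_zero]
  · rw [qbinPlusL_eq_qbinL (.inl hn), qbinL, gaussZL_eq_zero _ (by lia)]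

theorem qbinPlusL_of_lt {n m : ℤ} (h : n < m) : qbinPlusL n m = 0 := by
  by_contra hne
  exact h.not_ge (le_and_nonneg_or_neg_of_qbinPlusL_ne_zero hne).1

theorem qbinPlusL_self (n : ℤ) : qbinPlusL n n = 1 := by
  rcases lt_or_ge n 0 with hn | hn
  · rw [qbinPlusL_eq_neg_one_pow_mul (.inl hn), gaussZL_self _ (by lia)]
    simp [Qh_zero]
  · rw [qbinPlusL_eq_qbinL (.inl hn), qbinL, gaussZL_self _ hn]

theorem qbinPlusL_zero_left (m : ℤ) : qbinPlusL 0 m = if m = 0 then 1 else 0 := by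
  rw [qbinPlusL_eq_qbinL (.inl le_rfl), qbinL, gaussZL_zero_left]

theorem qbinPlusL_zero_right {n : ℤ} (hn : 0 ≤ n) : qbinPlusL n 0 = 1 := by
  rw [qbinPlusL_eq_qbinL (.inl hn), qbinL, gaussZL_zero_right _ hn]

theorem qbinPlusL_sub_right {n : ℤ} (hn : 0 ≤ n) (m : ℤ) :
    qbinPlusL n (n - m) = qbinPlusL n m := by
  rw [qbinPlusL_eq_qbinL (.inl hn), qbinPlusL_eq_qbinL (.inl hn), qbinL, qbinL,
    gaussZL_sub_right 2 hn]

theorem qbinPlusL_eq_mul_add (n m : ℤ) :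
    qbinPlusL n m = Qh (2 * m) * qbinPlusL (n - 1) m + qbinPlusL (n - 1) (m - 1) := by
  obtain h | h | ⟨rfl, rfl⟩ : (1 ≤ n ∨ 1 ≤ m) ∨ (n < 0 ∨ m < 0) ∨ (n = 0 ∧ m = 0) := by lia
  · rw [qbinPlusL_eq_qbinL (by lia), qbinPlusL_eq_qbinL (by lia), qbinPlusL_eq_qbinL (by lia)]
    simpa [qbinL] using gaussZL_add_one 2 (n := n - 1) (m := m) (by lia)
  · have hpascal := gaussZL_add_one (-2) (n := -m - 1) (m := -n) (by lia)
    have hsign := neg_one_pow_natAbs_add_one (R := LL) (n - 1 - m)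
    have hexp : Qh (2 * m) * Qh (-((n - 1 - m) ^ 2 + (n - 1 - m))) =
        Qh (-((n - m) ^ 2 + (n - m))) * Qh (-2 * -n) := by
      rw [← Qh_add, ← Qh_add]; congr 1; ring
    rw [qbinPlusL_eq_neg_one_pow_mul h, qbinPlusL_eq_neg_one_pow_mul (by lia),
      qbinPlusL_eq_neg_one_pow_mul (by lia), sub_sub_sub_cancel_right,
      show -(n - 1) - 1 = -n by ring, show -(m - 1) - 1 = -m - 1 + 1 by ring, hpascal,
      show n - m = n - 1 - m + 1 by ring, hsign, show n - 1 - m + 1 = n - m by ring]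
    linear_combination (-(-1) ^ (n - 1 - m).natAbs * gaussZL (Qh (-2)) (-m - 1) (-n)) * hexp
  · rw [qbinPlusL_self, qbinPlusL_of_lt (by lia), qbinPlusL_self, mul_zero, zero_add]

theorem qbinPlusL_eq_add_mul (n m : ℤ) :
    qbinPlusL n m = qbinPlusL (n - 1) m + Qh (2 * (n - m)) * qbinPlusL (n - 1) (m - 1) := by
  obtain h | h | ⟨rfl, rfl⟩ : (1 ≤ n ∨ 1 ≤ m) ∨ (n < 0 ∨ m < 0) ∨ (n = 0 ∧ m = 0) := by lia
  · rw [qbinPlusL_eq_qbinL (by lia), qbinPlusL_eq_qbinL (by lia), qbinPlusL_eq_qbinL (by lia)]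
    simpa [qbinL] using gaussZL_add_one' 2 (n := n - 1) (m := m) (by lia)
  · have hpascal := gaussZL_add_one' (-2) (n := -m - 1) (m := -n) (by lia)
    have hsign := neg_one_pow_natAbs_add_one (R := LL) (n - 1 - m)
    have hexp : Qh (2 * (n - m)) * Qh (-((n - m) ^ 2 + (n - m))) =
        Qh (-((n - 1 - m) ^ 2 + (n - 1 - m))) := Qh_mul_Qh (by ring)
    have hinv : Qh (2 * (n - m)) * Qh (-2 * (-m - 1 + 1 - -n)) = 1 := Qh_mul_Qh (by ring)
    rw [qbinPlusL_eq_neg_one_pow_mul h, qbinPlusL_eq_neg_one_pow_mul (by lia),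
      qbinPlusL_eq_neg_one_pow_mul (by lia), sub_sub_sub_cancel_right,
      show -(n - 1) - 1 = -n by ring, show -(m - 1) - 1 = -m - 1 + 1 by ring, hpascal,
      show n - m = n - 1 - m + 1 by ring, hsign, show n - 1 - m + 1 = n - m by ring]
    linear_combination ((-1) ^ (n - 1 - m).natAbs * gaussZL (Qh (-2)) (-m - 1) (-n)) * hexp +
      ((-1) ^ (n - 1 - m).natAbs * gaussZL (Qh (-2)) (-m - 1) (-n - 1) *
        Qh (-((n - m) ^ 2 + (n - m)))) * hinv
  · rw [qbinPlusL_self, qbinPlusL_of_lt (by lia), qbinPlusL_self, mul_one, zero_add, sub_zero,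
      mul_zero, Qh_zero]

theorem one_sub_mul_qbinPlusL (n m : ℤ) :
    (1 - Qh (2 * (n - m))) * qbinPlusL n m = (1 - Qh (2 * n)) * qbinPlusL (n - 1) m := by
  have hexp : Qh (2 * (n - m)) * Qh (2 * m) = Qh (2 * n) := Qh_mul_Qh (by ring)
  linear_combination qbinPlusL_eq_add_mul n m - Qh (2 * (n - m)) * qbinPlusL_eq_mul_add n m -
    qbinPlusL (n - 1) m * hexp

theorem one_sub_mul_qbinPlusL' (n m : ℤ) :
    (1 - Qh (2 * m)) * qbinPlusL n m = (1 - Qh (2 * (n + 1 - m))) * qbinPlusL n (m - 1) := by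
  have h := (qbinPlusL_eq_mul_add (n + 1) m).symm.trans (qbinPlusL_eq_add_mul (n + 1) m)
  rw [add_sub_cancel_right] at h
  linear_combination -h

theorem qbinPlusL_mul_qbinPlusL (n m k : ℤ) :
    qbinPlusL n m * qbinPlusL m k = qbinPlusL n k * qbinPlusL (n - k) (m - k) := by
  rcases lt_or_ge m k with hmk | hkm
  · rw [qbinPlusL_of_lt hmk, mul_zero]
    by_contra hne
    have hl := le_and_nonneg_or_neg_of_qbinPlusL_ne_zero (left_ne_zero_of_mul (Ne.symm hne))
    have hr := le_and_nonneg_or_neg_of_qbinPlusL_ne_zero (right_ne_zero_of_mul (Ne.symm hne))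
    lia
  induction k, hkm using Int.leInductionDown with
  | base =>
    rw [qbinPlusL_self, sub_self, mul_one]
    rcases lt_or_ge n m with h | h
    · rw [qbinPlusL_of_lt h, zero_mul]
    · rw [qbinPlusL_zero_right (by lia), mul_one]
  | pred k hkm ih =>
    apply mul_left_cancel₀ (one_sub_Qh_ne_zero (a := 2 * (m + 1 - k)) (by lia))
    have hbottom := one_sub_mul_qbinPlusL' (n + 1 - k) (m + 1 - k)
    have htop := one_sub_mul_qbinPlusL (n + 1 - k) (m - k)
    rw [show n + 1 - k + 1 - (m + 1 - k) = n + 1 - m by ring,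
      show m + 1 - k - 1 = m - k by ring] at hbottom
    rw [show n + 1 - k - (m - k) = n + 1 - m by ring, show n + 1 - k - 1 = n - k by ring] at htop
    rw [show n - (k - 1) = n + 1 - k by ring, show m - (k - 1) = m + 1 - k by ring]
    linear_combination (1 - Qh (2 * k)) * ih - qbinPlusL n m * one_sub_mul_qbinPlusL' m k +
      qbinPlusL (n - k) (m - k) * one_sub_mul_qbinPlusL' n k -
      qbinPlusL n (k - 1) * (hbottom + htop)

end ExtendedBinomial

section PascalUniqueness

/-- Along a diagonal `X - i = t` the recurrence propagates equality in both directions, because `v`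
is regular; the terms `u` involve the previous diagonal only. -/
theorem eq_of_pascal_recurrence {R : Type*} [Ring R] {F G u v : ℤ → ℤ → R}
    (hF : ∀ X i, F X i = u X i * F (X - 1) i + v X i * F (X - 1) (i - 1))
    (hG : ∀ X i, G X i = u X i * G (X - 1) i + v X i * G (X - 1) (i - 1))
    (hv : ∀ X i, IsLeftRegular (v X i)) (c X₀ : ℤ)
    (hlow : ∀ X i, X - i < c → F X i = G X i) (hbase : ∀ i, F X₀ i = G X₀ i) (X i : ℤ) :
    F X i = G X i := by
  suffices h : ∀ t, c - 1 ≤ t → ∀ X, F X (X - t) = G X (X - t) by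
    rcases lt_or_ge (X - i) c with hi | hi
    · exact hlow X i hi
    · simpa using h (X - i) (by lia) X
  refine Int.leInduction (fun X => hlow X _ (by lia)) fun t _ ih => ?_
  have hstep (X : ℤ) : F X (X - (t + 1)) = G X (X - (t + 1)) ↔
      F (X - 1) (X - 1 - (t + 1)) = G (X - 1) (X - 1 - (t + 1)) := by
    rw [hF, hG, show X - (t + 1) = X - 1 - t by ring, ih (X - 1), add_right_inj,
      (hv _ _).eq_iff, show X - 1 - t - 1 = X - 1 - (t + 1) by ring]
  intro X
  induction X using Int.inductionOn' (b := X₀) with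
  | zero => exact hbase _
  | succ X _ hX => rwa [hstep, add_sub_cancel_right]
  | pred X _ hX => rwa [← hstep]

end PascalUniqueness

section LinkingIdentity

theorem finsum_int_sub_add_one {G : Type*} [AddCommGroup G] {f : ℤ → G}
    (hf : f.HasFiniteSupport) : ∑ᶠ k, (f k - f (k + 1)) = 0 := by
  have hshift : (fun k => f (k + 1)).HasFiniteSupport := by
    have := add_left_injective (1 : ℤ)
    fun_prop
  rw [finsum_sub_distrib hf hshift]
  exact sub_eq_zero.2 (finsum_comp_equiv (Equiv.addRight (1 : ℤ))).symm

/-- The `k`-th summand of the linking identity `finsum_linkingTerm`. -/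
def linkingTerm (X Y i j k : ℤ) : LL :=
  Qh (2 * ((i - k) * (j - k))) * qbinPlusL (X - j) (i - k) * qbinPlusL (Y - i) (j - k) *
    qbinPlusL (X + Y - i - j + k) k

/-- The sequence whose differences in `k` are the defect of the Pascal recurrence for
`linkingTerm`. -/
def linkingFlux (X Y i j k : ℤ) : LL :=
  Qh (2 * ((i - k) * (j - k) + (X + Y - i - j))) * qbinPlusL (X - 1 - j) (i - k) *
    qbinPlusL (Y - i) (j - k) * qbinPlusL (X + Y - i - j + k - 1) (k - 1)

theorem bounds_of_linkingTerm_ne_zero {X Y i j k : ℤ} (h : linkingTerm X Y i j k ≠ 0) :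
    i + j - X ≤ k ∧ k ≤ max i j ∧ i + j ≤ X + Y := by
  have htop := le_and_nonneg_or_neg_of_qbinPlusL_ne_zero (right_ne_zero_of_mul h)
  have hright := le_and_nonneg_or_neg_of_qbinPlusL_ne_zero
    (right_ne_zero_of_mul (left_ne_zero_of_mul h))
  have hleft := le_and_nonneg_or_neg_of_qbinPlusL_ne_zero
    (right_ne_zero_of_mul (left_ne_zero_of_mul (left_ne_zero_of_mul h)))
  lia

@[fun_prop]
theorem hasFiniteSupport_linkingTerm (X Y i j : ℤ) : (linkingTerm X Y i j).HasFiniteSupport :=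
  (Set.finite_Icc (i + j - X) (max i j)).subset fun _ hk =>
    (bounds_of_linkingTerm_ne_zero hk).imp_right And.left

theorem hasFiniteSupport_linkingFlux (X Y i j : ℤ) : (linkingFlux X Y i j).HasFiniteSupport := by
  refine (Set.finite_Icc (i + j - X) (max i j)).subset fun k hk => ?_
  have htop := le_and_nonneg_or_neg_of_qbinPlusL_ne_zero (right_ne_zero_of_mul hk)
  have hright := le_and_nonneg_or_neg_of_qbinPlusL_ne_zero
    (right_ne_zero_of_mul (left_ne_zero_of_mul hk))
  have hleft := le_and_nonneg_or_neg_of_qbinPlusL_ne_zero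
    (right_ne_zero_of_mul (left_ne_zero_of_mul (left_ne_zero_of_mul hk)))
  simp only [Set.mem_Icc]
  lia

theorem linkingTerm_eq (X Y i j k : ℤ) : linkingTerm X Y i j k =
    linkingTerm (X - 1) Y i j k + Qh (2 * (X - i)) * linkingTerm (X - 1) Y (i - 1) j k +
      (linkingFlux X Y i j k - linkingFlux X Y i j (k + 1)) := by
  have hleft := qbinPlusL_eq_add_mul (X - j) (i - k)
  have htop := qbinPlusL_eq_add_mul (X + Y - i - j + k) k
  have hright := qbinPlusL_eq_add_mul (Y - i + 1) (j - k)
  rw [show X - j - 1 = X - 1 - j by ring, show i - k - 1 = i - 1 - k by ring] at hleft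
  rw [add_sub_cancel_right] at hright
  have hexp₁ : Qh (2 * ((i - k) * (j - k))) * Qh (2 * (X - j - (i - k))) =
      Qh (2 * (X - i)) * Qh (2 * ((i - 1 - k) * (j - k))) := by
    rw [← Qh_add, ← Qh_add]; congr 1; ring
  have hexp₂ : Qh (2 * ((i - k) * (j - k))) * Qh (2 * (X + Y - i - j + k - k)) =
      Qh (2 * ((i - k) * (j - k) + (X + Y - i - j))) := Qh_mul_Qh (by ring)
  have hexp₃ : Qh (2 * (X - i)) * Qh (2 * ((i - 1 - k) * (j - k))) *
      Qh (2 * (Y - i + 1 - (j - k))) = Qh (2 * ((i - 1 - k) * (j - k - 1) + (X + Y - i - j))) := by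
    rw [← Qh_add, ← Qh_add]; congr 1; ring
  simp only [linkingTerm, linkingFlux]
  rw [show X - 1 + Y - i - j + k = X + Y - i - j + k - 1 by ring,
    show X - 1 + Y - (i - 1) - j + k = X + Y - i - j + k by ring,
    show Y - (i - 1) = Y - i + 1 by ring, show i - (k + 1) = i - 1 - k by ring,
    show j - (k + 1) = j - k - 1 by ring, add_sub_cancel_right,
    show X + Y - i - j + (k + 1) - 1 = X + Y - i - j + k by ring, hright, hleft]
  generalize qbinPlusL (X - 1 - j) (i - k) = A
  generalize qbinPlusL (X - 1 - j) (i - 1 - k) = A'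
  generalize qbinPlusL (Y - i) (j - k) = B
  generalize qbinPlusL (Y - i) (j - k - 1) = B'
  linear_combination Qh (2 * ((i - k) * (j - k))) * A * B * htop +
    A * B * qbinPlusL (X + Y - i - j + k - 1) (k - 1) * hexp₂ +
    qbinPlusL (X + Y - i - j + k) k * (A' * B * hexp₁ - A' * B' * hexp₃)

theorem finsum_linkingTerm_eq_add (X Y i j : ℤ) :
    ∑ᶠ k, linkingTerm X Y i j k = ∑ᶠ k, linkingTerm (X - 1) Y i j k +
      Qh (2 * (X - i)) * ∑ᶠ k, linkingTerm (X - 1) Y (i - 1) j k := by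
  have hflux := hasFiniteSupport_linkingFlux X Y i j
  have hinj := add_left_injective (1 : ℤ)
  rw [finsum_congr (linkingTerm_eq X Y i j), finsum_add_distrib (by fun_prop) (by fun_prop),
    finsum_add_distrib (by fun_prop) (by fun_prop), finsum_int_sub_add_one hflux, add_zero,
    mul_finsum]

theorem finsum_linkingTerm (X Y i j : ℤ) :
    ∑ᶠ k, linkingTerm X Y i j k = qbinPlusL X i * qbinPlusL Y j := by
  refine eq_of_pascal_recurrence (F := fun X i => ∑ᶠ k, linkingTerm X Y i j k)
    (G := fun X i => qbinPlusL X i * qbinPlusL Y j) (u := fun _ _ => 1)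
    (v := fun X i => Qh (2 * (X - i))) (fun X i => ?_) (fun X i => ?_)
    (fun _ _ => (isUnit_Qh _).isRegular.left) (j - Y) j (fun X i h => ?_) (fun i => ?_) X i
  · rw [one_mul, finsum_linkingTerm_eq_add]
  · rw [qbinPlusL_eq_add_mul X i]
    ring
  · rw [finsum_eq_zero_of_forall_eq_zero fun k => ?_]
    · by_contra hne
      have hX := le_and_nonneg_or_neg_of_qbinPlusL_ne_zero (left_ne_zero_of_mul (Ne.symm hne))
      have hY := le_and_nonneg_or_neg_of_qbinPlusL_ne_zero (right_ne_zero_of_mul (Ne.symm hne))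
      lia
    · by_contra hne
      have := bounds_of_linkingTerm_ne_zero hne
      lia
  · rw [finsum_eq_single _ i fun k hk => ?_]
    · rw [linkingTerm, mul_comm (qbinPlusL j i), qbinPlusL_mul_qbinPlusL,
        show j + Y - i - j + i = Y by ring, sub_self, sub_self, zero_mul, mul_zero, Qh_zero,
        qbinPlusL_zero_right le_rfl, one_mul, one_mul, mul_comm]
    · rw [linkingTerm, sub_self, qbinPlusL_zero_left, if_neg (by lia), mul_zero, zero_mul, zero_mul]

end LinkingIdentity

section Vandermonde

/-- The `k`-th summand of the `q`-Vandermonde identity `finsum_vandermondeTerm`. -/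
def vandermondeTerm (X Y r k : ℤ) : LL :=
  Qh (2 * (k * (X - r + k))) * qbinPlusL X (r - k) * qbinPlusL Y k

theorem bounds_of_vandermondeTerm_ne_zero {X Y r k : ℤ} (h : vandermondeTerm X Y r k ≠ 0) :
    r - X ≤ k ∧ k ≤ Y := by
  have hY := le_and_nonneg_or_neg_of_qbinPlusL_ne_zero (right_ne_zero_of_mul h)
  have hX := le_and_nonneg_or_neg_of_qbinPlusL_ne_zero
    (right_ne_zero_of_mul (left_ne_zero_of_mul h))
  lia

@[fun_prop]
theorem hasFiniteSupport_vandermondeTerm (X Y r : ℤ) : (vandermondeTerm X Y r).HasFiniteSupport :=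
  (Set.finite_Icc (r - X) Y).subset fun _ => bounds_of_vandermondeTerm_ne_zero

theorem finsum_vandermondeTerm_eq_add (X Y r : ℤ) :
    ∑ᶠ k, vandermondeTerm X Y r k = Qh (2 * r) * ∑ᶠ k, vandermondeTerm (X - 1) Y r k +
      ∑ᶠ k, vandermondeTerm (X - 1) Y (r - 1) k := by
  rw [mul_finsum, ← finsum_add_distrib (by fun_prop) (by fun_prop)]
  refine finsum_congr fun k => ?_
  have hexp : Qh (2 * (k * (X - r + k))) * Qh (2 * (r - k)) =
      Qh (2 * r) * Qh (2 * (k * (X - 1 - r + k))) := by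
    rw [← Qh_add, ← Qh_add]; congr 1; ring
  simp only [vandermondeTerm]
  rw [qbinPlusL_eq_mul_add X, show r - 1 - k = r - k - 1 by ring,
    show X - 1 - (r - 1) + k = X - r + k by ring]
  linear_combination qbinPlusL (X - 1) (r - k) * qbinPlusL Y k * hexp

theorem finsum_vandermondeTerm (X Y r : ℤ) :
    ∑ᶠ k, vandermondeTerm X Y r k = qbinPlusL (X + Y) r := by
  refine eq_of_pascal_recurrence (F := fun X r => ∑ᶠ k, vandermondeTerm X Y r k)
    (G := fun X r => qbinPlusL (X + Y) r) (u := fun _ r => Qh (2 * r)) (v := fun _ _ => 1)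
    (fun X r => ?_) (fun X r => ?_) (fun _ _ => isRegular_one.left) (-Y) 0 (fun X r h => ?_)
    (fun r => ?_) X r
  · rw [one_mul, finsum_vandermondeTerm_eq_add]
  · rw [one_mul, qbinPlusL_eq_mul_add (X + Y) r, add_sub_right_comm]
  · rw [qbinPlusL_of_lt (by lia)]
    refine finsum_eq_zero_of_forall_eq_zero fun k => ?_
    by_contra hne
    have := bounds_of_vandermondeTerm_ne_zero hne
    lia
  · rw [finsum_eq_single _ r fun k hk => ?_]
    · simp [vandermondeTerm, qbinPlusL_zero_left, Qh_zero]
    · rw [vandermondeTerm, qbinPlusL_zero_left, if_neg (by lia), mul_zero, zero_mul]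

theorem finsum_qbinPlusL_add_mul_qbinPlusL_of_nonneg {X : ℤ} (hX : 0 ≤ X) (Y a : ℤ) :
    ∑ᶠ n, Qh (2 * (n * (n + a))) * qbinPlusL X (n + a) * qbinPlusL Y n =
      qbinPlusL (X + Y) (X - a) := by
  rw [← finsum_vandermondeTerm]
  refine finsum_congr fun k => ?_
  rw [vandermondeTerm, ← qbinPlusL_sub_right hX, show X - (k + a) = X - a - k by ring]
  congr 4
  ring

theorem finsum_qbinPlusL_add_mul_qbinPlusL {X Y : ℤ} (hXY : 0 ≤ X + Y) (a : ℤ) :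
    ∑ᶠ n, Qh (2 * (n * (n + a))) * qbinPlusL X (n + a) * qbinPlusL Y n =
      qbinPlusL (X + Y) (Y + a) := by
  rcases le_or_gt 0 X with hX | hX
  · rw [finsum_qbinPlusL_add_mul_qbinPlusL_of_nonneg hX, ← qbinPlusL_sub_right hXY]
    congr 1
    ring
  · rw [add_comm X, ← sub_neg_eq_add Y a,
      ← finsum_qbinPlusL_add_mul_qbinPlusL_of_nonneg (by lia : 0 ≤ Y),
      ← finsum_comp_equiv (Equiv.addRight (-a))]
    refine finsum_congr fun k => ?_
    simp only [Equiv.coe_addRight, neg_add_cancel_right]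
    rw [mul_comm k, mul_right_comm]

end Vandermonde

section BinomialSum

/-- The sum `Σ_m [n, m] f(m)` of a sequence against the Gaussian binomials with top `n`. -/
def qbinSum (n : ℤ) (f : ℤ → LL) : LL := ∑ᶠ m, qbinL n m * f m

theorem nonneg_and_le_of_qbinL_ne_zero {n m : ℤ} (h : qbinL n m ≠ 0) : 0 ≤ m ∧ m ≤ n := by
  contrapose! h
  exact gaussZL_eq_zero _ (by lia)

theorem qbinL_zero_left (m : ℤ) : qbinL 0 m = if m = 0 then 1 else 0 :=
  gaussZL_zero_left _ m

@[fun_prop]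
theorem hasFiniteSupport_qbinL (n : ℤ) : (qbinL n).HasFiniteSupport :=
  (Set.finite_Icc 0 n).subset fun _ => nonneg_and_le_of_qbinL_ne_zero

theorem qbinSum_congr {n : ℤ} {f g : ℤ → LL} (h : ∀ m, 0 ≤ m → m ≤ n → f m = g m) :
    qbinSum n f = qbinSum n g := by
  refine finsum_congr fun m => ?_
  by_cases hm : qbinL n m = 0
  · rw [hm, zero_mul, zero_mul]
  · rw [h m (nonneg_and_le_of_qbinL_ne_zero hm).1 (nonneg_and_le_of_qbinL_ne_zero hm).2]

theorem qbinSum_add (n : ℤ) (f g : ℤ → LL) :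
    qbinSum n (fun m => f m + g m) = qbinSum n f + qbinSum n g := by
  simp only [qbinSum, mul_add]
  exact finsum_add_distrib (by fun_prop) (by fun_prop)

theorem qbinSum_mul_left (n : ℤ) (c : LL) (f : ℤ → LL) :
    qbinSum n (fun m => c * f m) = c * qbinSum n f := by
  simp only [qbinSum, mul_finsum, mul_left_comm]

theorem qbinSum_zero (f : ℤ → LL) : qbinSum 0 f = f 0 := by
  rw [qbinSum, finsum_eq_single _ 0 fun m hm => by rw [qbinL_zero_left, if_neg hm, zero_mul],
    qbinL_zero_left, if_pos rfl, one_mul]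

theorem qbinSum_add_one {n : ℤ} (hn : 0 ≤ n) (f : ℤ → LL) :
    qbinSum (n + 1) f = qbinSum n fun m => Qh (2 * m) * f m + f (m + 1) := by
  have hinj := sub_left_injective (b := (1 : ℤ))
  have hpascal (m : ℤ) : qbinL (n + 1) m * f m =
      qbinL n m * (Qh (2 * m) * f m) + qbinL n (m - 1) * f m := by
    rw [qbinL, gaussZL_add_one 2 (by lia)]
    simp only [qbinL]
    ring
  rw [qbinSum_add, qbinSum, finsum_congr hpascal,
    finsum_add_distrib (by fun_prop) (by fun_prop)]
  congr 1
  rw [← finsum_comp_equiv (Equiv.addRight (1 : ℤ))]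
  simp only [Equiv.coe_addRight, add_sub_cancel_right, qbinSum]

theorem qbinSum_add_one' {n : ℤ} (hn : 0 ≤ n) (f : ℤ → LL) :
    qbinSum (n + 1) f = qbinSum n fun m => f m + Qh (2 * (n - m)) * f (m + 1) := by
  have hinj := sub_left_injective (b := (1 : ℤ))
  have hpascal (m : ℤ) : qbinL (n + 1) m * f m =
      qbinL n m * f m + qbinL n (m - 1) * (Qh (2 * (n + 1 - m)) * f m) := by
    rw [qbinL, gaussZL_add_one' 2 (by lia)]
    simp only [qbinL]
    ring
  rw [qbinSum_add, qbinSum, finsum_congr hpascal,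
    finsum_add_distrib (by fun_prop) (by fun_prop)]
  congr 1
  rw [← finsum_comp_equiv (Equiv.addRight (1 : ℤ))]
  simp only [Equiv.coe_addRight, add_sub_cancel_right, qbinSum, add_sub_add_right_eq_sub]

end BinomialSum

section Supernomial

variable {k : ℕ}

/-- The summand of the supernomial `S(L + x e_k, a)` at `n ∈ ℤ^k`. Adjoining `n_{k+1} = x` to `n`
makes its last factor `[L_k + x, n_k]` an instance of the general one, which keeps the family
closed under removal of the last coordinate. -/
def supernomialTerm (L : Fin k → ℤ) (x a : ℤ) (n : Fin k → ℤ) : LL :=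
  if ∑ i, n i = a then
    Qh (2 * ∑ i, n i * (x - Fin.snoc (α := fun _ => ℤ) n x i.succ + ∑ j with i < j, L j)) *
      ∏ i, qbinL (L i + Fin.snoc (α := fun _ => ℤ) n x i.succ) (n i)
  else 0

/-- The supernomial `S(L + x e_k, a)`. -/
def supernomial (L : Fin k → ℤ) (x a : ℤ) : LL := ∑ᶠ n, supernomialTerm L x a n

theorem qSupL_eq_supernomial (L : Fin k → ℤ) (a : ℤ) : qSupL L a = supernomial L 0 a := by
  have hnext (n : Fin k → ℤ) (i : Fin k) : Fin.snoc (α := fun _ => ℤ) n 0 i.succ =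
      if hi : (i : ℕ) + 1 < k then n ⟨i + 1, hi⟩ else 0 := rfl
  refine finsum_congr fun n => ?_
  simp only [supernomialTerm, hnext]
  congr 4
  refine Finset.sum_congr rfl fun i _ => ?_
  split_ifs with hi
  · ring
  · rw [Finset.sum_eq_zero fun j hj => ?_]
    · ring
    · have := (Finset.mem_filter.1 hj).2
      lia

theorem supernomialTerm_snoc (L : Fin (k + 1) → ℤ) (x a : ℤ) (n : Fin k → ℤ) (m : ℤ) :
    supernomialTerm L x a (Fin.snoc n m) = qbinL (L (Fin.last k) + x) m *
      (Qh (2 * ((L (Fin.last k) + x - m) * (a - m))) *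
        supernomialTerm (Fin.init L) m (a - m) n) := by
  simp only [supernomialTerm, Fin.sum_univ_castSucc, Fin.prod_univ_castSucc, Fin.snoc_castSucc,
    Fin.snoc_last, Fin.succ_castSucc, Fin.succ_last, Finset.sum_filter,
    Fin.castSucc_lt_castSucc_iff, Fin.castSucc_lt_last, if_true, lt_self_iff_false, if_false,
    (Fin.castSucc_lt_last _).not_gt, Finset.sum_const_zero, ← eq_sub_iff_add_eq]
  split_ifs with hn
  · have hexp : ∑ i, n i * (x - Fin.snoc (α := fun _ => ℤ) n m i.succ +
          ((∑ j : Fin k, if i < j then L j.castSucc else 0) + L (Fin.last k))) +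
        m * (x - x + (0 + 0)) =
        (L (Fin.last k) + x - m) * (a - m) +
          ∑ i, n i * (m - Fin.snoc (α := fun _ => ℤ) n m i.succ +
            ∑ j : Fin k, if i < j then L j.castSucc else 0) := by
      rw [← hn, Finset.mul_sum, ← Finset.sum_add_distrib]
      simp only [sub_self, add_zero, mul_zero]
      exact Finset.sum_congr rfl fun i _ => by ring
    rw [hexp, mul_add, Qh_add]
    simp only [Fin.init]
    ring
  · simp only [mul_zero]

theorem hasFiniteSupport_supernomialTerm (L : Fin k → ℤ) (x a : ℤ) :
    (supernomialTerm L x a).HasFiniteSupport := by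
  induction k generalizing x a with
  | zero => exact Set.toFinite _
  | succ k ih =>
    refine ((Set.finite_Icc 0 (L (Fin.last k) + x)).biUnion fun m _ =>
      (ih (Fin.init L) m (a - m)).image fun n => Fin.snoc (α := fun _ => ℤ) n m).subset
      fun n hn => ?_
    rw [← Fin.snoc_init_self n, Function.mem_support, supernomialTerm_snoc] at hn
    exact Set.mem_biUnion (nonneg_and_le_of_qbinL_ne_zero (left_ne_zero_of_mul hn))
      ⟨_, right_ne_zero_of_mul (right_ne_zero_of_mul hn), Fin.snoc_init_self n⟩

theorem supernomial_zero (L : Fin 0 → ℤ) (x a : ℤ) :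
    supernomial L x a = if a = 0 then 1 else 0 := by
  simp [supernomial, supernomialTerm, finsum_unique, Qh_zero, eq_comm]

theorem supernomial_succ (L : Fin (k + 1) → ℤ) (x a : ℤ) :
    supernomial L x a = qbinSum (L (Fin.last k) + x) fun m =>
      Qh (2 * ((L (Fin.last k) + x - m) * (a - m))) * supernomial (Fin.init L) m (a - m) := by
  have hsupp : (fun y : ℤ × (Fin k → ℤ) =>
      supernomialTerm L x a (Fin.snocEquiv (fun _ => ℤ) y)).HasFiniteSupport :=
    (hasFiniteSupport_supernomialTerm L x a).fun_comp_of_injective (Equiv.injective _)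
  rw [supernomial, ← finsum_comp_equiv (Fin.snocEquiv fun _ => ℤ), finsum_curry _ hsupp]
  refine finsum_congr fun m => ?_
  simp only [supernomial, mul_finsum, ← supernomialTerm_snoc]
  rfl

/-- The weight `Σ_i i L_i`, with `L_1, …, L_k` stored as `L 0, …, L (k-1)`: for `L ≥ 0` it is the
largest `a` with `S(L, a) ≠ 0`. -/
def weight (L : Fin k → ℤ) : ℤ := ∑ i : Fin k, ((i : ℤ) + 1) * L i

theorem weight_succ (L : Fin (k + 1) → ℤ) :
    weight L = weight (Fin.init L) + (k + 1) * L (Fin.last k) := by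
  simp only [weight, Fin.sum_univ_castSucc, Fin.val_castSucc, Fin.val_last, Fin.init]

theorem bounds_of_supernomial_ne_zero {L : Fin k → ℤ} {x a : ℤ} (h : supernomial L x a ≠ 0) :
    0 ≤ a ∧ a ≤ weight L + k * x := by
  induction k generalizing x a with
  | zero =>
    rw [supernomial_zero] at h
    simp [weight, (ite_ne_right_iff.1 h).1]
  | succ k ih =>
    rw [supernomial_succ] at h
    obtain ⟨m, hm⟩ := not_forall.1 (mt finsum_eq_zero_of_forall_eq_zero h)
    have hbinom := nonneg_and_le_of_qbinL_ne_zero (left_ne_zero_of_mul hm)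
    have hrest := ih (right_ne_zero_of_mul (right_ne_zero_of_mul hm))
    rw [weight_succ]
    push_cast
    exact ⟨by lia, by nlinarith⟩

/-- The unit vector `e_j ∈ ℤ^k` of the indexing `1, …, k`, so that `e_0 = 0`. -/
def unitVec (k j : ℕ) : Fin k → ℤ := fun i => if (i : ℕ) + 1 = j then 1 else 0

theorem unitVec_nonneg (j : ℕ) (i : Fin k) : 0 ≤ unitVec k j i := by
  rw [unitVec]
  split_ifs <;> lia

theorem init_add_unitVec_last (L : Fin (k + 1) → ℤ) :
    Fin.init (L + unitVec (k + 1) (k + 1)) = Fin.init L := by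
  ext i
  have := i.isLt
  simp [Fin.init, unitVec, this.ne]

theorem supernomial_add_unitVec (L : Fin k → ℤ) (x a : ℤ) :
    supernomial (L + unitVec k k) x a = supernomial L (x + 1) a := by
  cases k with
  | zero => simp only [supernomial_zero]
  | succ k =>
    rw [supernomial_succ, supernomial_succ, init_add_unitVec_last]
    simp only [Pi.add_apply, unitVec, Fin.val_last, if_true, add_right_comm, ← add_assoc]

theorem supernomial_add_unitVec_pred (L : Fin (k + 1) → ℤ) (x a : ℤ) :
    supernomial (L + unitVec (k + 1) k) x a = qbinSum (L (Fin.last k) + x) fun m =>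
      Qh (2 * ((L (Fin.last k) + x - m) * (a - m))) *
        supernomial (Fin.init L) (m + 1) (a - m) := by
  have hlast : (L + unitVec (k + 1) k) (Fin.last k) = L (Fin.last k) := by simp [unitVec]
  rw [supernomial_succ, hlast]
  simp only [← supernomial_add_unitVec]
  rfl

theorem supernomial_add_one {L : Fin (k + 1) → ℤ} {x : ℤ} (h : 0 ≤ L (Fin.last k) + x) (a : ℤ) :
    supernomial L (x + 1) a =
      Qh (2 * a) * supernomial L x a + supernomial (L + unitVec (k + 1) k) x (a - 1) := by
  rw [supernomial_succ, ← add_assoc, qbinSum_add_one h, qbinSum_add, supernomial_succ,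
    supernomial_add_unitVec_pred, ← qbinSum_mul_left]
  congr 1
  · refine qbinSum_congr fun m _ _ => ?_
    rw [← mul_assoc (Qh _), ← mul_assoc (Qh _), ← Qh_add, ← Qh_add]
    congr 2
    ring
  · refine qbinSum_congr fun m _ _ => ?_
    rw [add_sub_add_right_eq_sub, sub_add_eq_sub_sub_swap]

theorem supernomial_add_one_of_exchange {L : Fin (k + 1) → ℤ} {x : ℤ}
    (h : 0 ≤ L (Fin.last k) + x) (a : ℤ)
    (hexchange : ∀ y s, 0 ≤ y →
      Qh (2 * s) * supernomial (Fin.init L) y s + supernomial (Fin.init L) (y + 1) (s - 1) =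
        supernomial (Fin.init L) (y + 1) s + Qh (2 * (weight (Fin.init L) + k * y + (k + 1) - s)) *
          supernomial (Fin.init L) y (s - (k + 1))) :
    supernomial L (x + 1) a = supernomial (L + unitVec (k + 1) k) x a +
      Qh (2 * (weight L + (k + 1) * x + (k + 1) - a)) * supernomial L x (a - (k + 1)) := by
  rw [supernomial_succ, ← add_assoc, qbinSum_add_one' h, supernomial_add_unitVec_pred,
    supernomial_succ, ← qbinSum_mul_left, ← qbinSum_add]
  refine qbinSum_congr fun m hm _ => ?_
  set n := L (Fin.last k) + x
  have hleft : Qh (2 * ((n + 1 - m) * (a - m))) =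
      Qh (2 * ((n - m) * (a - m))) * Qh (2 * (a - m)) := by
    rw [Qh_mul_Qh]
    ring
  have hright : Qh (2 * (n - m)) * Qh (2 * ((n + 1 - (m + 1)) * (a - m - 1))) =
      Qh (2 * ((n - m) * (a - m))) := Qh_mul_Qh (by ring)
  have hlast : Qh (2 * ((n - m) * (a - m))) *
        Qh (2 * (weight (Fin.init L) + k * m + (k + 1) - (a - m))) =
      Qh (2 * (weight L + (k + 1) * x + (k + 1) - a)) *
        Qh (2 * ((n - m) * (a - (k + 1) - m))) := by
    rw [← Qh_add, ← Qh_add, weight_succ]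
    congr 1
    ring
  have hm' := hexchange m (a - m) hm
  rw [sub_right_comm a m (k + 1)] at hm'
  rw [← sub_sub a m]
  linear_combination supernomial (Fin.init L) m (a - m) * hleft +
    supernomial (Fin.init L) (m + 1) (a - m - 1) * hright +
    Qh (2 * ((n - m) * (a - m))) * hm' +
    supernomial (Fin.init L) m (a - (k + 1) - m) * hlast

theorem supernomial_exchange {L : Fin k → ℤ} (hL : ∀ i, 0 ≤ L i) (x a : ℤ) (hx : 0 ≤ x) :
    Qh (2 * a) * supernomial L x a + supernomial L (x + 1) (a - 1) =
      supernomial L (x + 1) a +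
        Qh (2 * (weight L + k * x + (k + 1) - a)) * supernomial L x (a - (k + 1)) := by
  induction k generalizing x a with
  | zero =>
    simp only [supernomial_zero, weight, Finset.univ_eq_empty, Finset.sum_empty]
    rcases eq_or_ne a 0 with rfl | h0
    · simp [Qh_zero]
    · rcases eq_or_ne a 1 with rfl | h1
      · simp [Qh_zero]
      · simp [h0, sub_ne_zero.2 h1]
  | succ k ih =>
    have hlast : 0 ≤ L (Fin.last k) + x := add_nonneg (hL _) hx
    rw [supernomial_add_one hlast a, supernomial_add_one_of_exchange hlast (a - 1)
      fun y s hy => ih (fun i => hL _) y s hy]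
    push_cast
    rw [show weight L + (k + 1) * x + (k + 1) - (a - 1) =
      weight L + (k + 1) * x + (k + 1 + 1) - a by ring, sub_sub a, add_comm 1 (_ : ℤ),
      add_assoc (Qh _ * _)]

theorem supernomial_add_one' {L : Fin (k + 1) → ℤ} (hL : ∀ i, 0 ≤ L i) {x : ℤ} (hx : 0 ≤ x)
    (a : ℤ) : supernomial L (x + 1) a = supernomial (L + unitVec (k + 1) k) x a +
      Qh (2 * (weight L + (k + 1) * x + (k + 1) - a)) * supernomial L x (a - (k + 1)) :=
  supernomial_add_one_of_exchange (add_nonneg (hL _) hx) a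
    (supernomial_exchange fun i => hL i.castSucc)

theorem bounds_of_qSupL_ne_zero {L : Fin k → ℤ} {a : ℤ} (h : qSupL L a ≠ 0) :
    0 ≤ a ∧ a ≤ weight L := by
  rw [qSupL_eq_supernomial] at h
  simpa using bounds_of_supernomial_ne_zero h

theorem qSupL_add_unitVec_last {L : Fin (k + 1) → ℤ} (hL : ∀ i, 0 ≤ L i) (a : ℤ) :
    qSupL (L + unitVec (k + 1) (k + 1)) a = qSupL (L + unitVec (k + 1) k) a +
      Qh (2 * (weight L + (k + 1) - a)) * qSupL L (a - (k + 1)) := by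
  simp only [qSupL_eq_supernomial]
  rw [supernomial_add_unitVec, supernomial_add_one' hL le_rfl, mul_zero, add_zero]

theorem qSupL_of_last_eq_zero {L : Fin (k + 1) → ℤ} (h : L (Fin.last k) = 0) (a : ℤ) :
    qSupL L a = qSupL (Fin.init L) a := by
  simp only [qSupL_eq_supernomial]
  rw [supernomial_succ, h, add_zero, qbinSum_zero, sub_zero, zero_mul, mul_zero, Qh_zero, one_mul,
    sub_zero]

theorem qSupL_one (L : Fin 1 → ℤ) (a : ℤ) : qSupL L a = qbinL (L 0) a := by
  rw [qSupL_eq_supernomial, supernomial_succ, add_zero, qbinSum,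
    finsum_eq_single _ a fun m hm => by
      rw [supernomial_zero, if_neg (sub_ne_zero.2 hm.symm), mul_zero, mul_zero],
    supernomial_zero, sub_self, mul_zero, mul_zero, Qh_zero, if_pos rfl, mul_one, mul_one]
  rfl

end Supernomial

section SecondDifference

variable {d : ℕ}

/-- The sequence `0, N'_1, …, N'_{d+1}, N'_{d+1}, …`. Extending `N'` this way turns `L = N' T_{d+1}`
into the negated second difference, boundary entries included. -/
def extNprime (d : ℕ) (N : Fin (d + 2) → ℤ) (c : ℕ) : ℤ :=
  if c = 0 then 0 else if h : c ≤ d then N ⟨c + 1, by lia⟩ else N 0 + N 1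

theorem extNprime_zero (N : Fin (d + 2) → ℤ) : extNprime d N 0 = 0 := rfl

theorem extNprime_succ (N : Fin (d + 2) → ℤ) (j : Fin d) :
    extNprime d N (j + 1) = N j.succ.succ := by
  rw [extNprime, if_neg (by lia), dif_pos (by lia)]
  rfl

theorem extNprime_of_lt (N : Fin (d + 2) → ℤ) {c : ℕ} (h : d < c) :
    extNprime d N c = N 0 + N 1 := by
  rw [extNprime, if_neg (by lia), dif_neg (by lia)]

theorem extNprime_sub (N M : Fin (d + 2) → ℤ) (c : ℕ) :
    extNprime d (N - M) c = extNprime d N c - extNprime d M c := by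
  simp only [extNprime, Pi.sub_apply]
  split_ifs <;> ring

theorem extNprime_nonneg {N : Fin (d + 2) → ℤ} (hN : ∀ a, 0 ≤ N a) (c : ℕ) :
    0 ≤ extNprime d N c := by
  rw [extNprime]
  split_ifs
  exacts [le_rfl, hN _, add_nonneg (hN 0) (hN 1)]

theorem Nprime_eq_extNprime (N : Fin (d + 2) → ℤ) (i : Fin (d + 1)) :
    Nprime d N i = extNprime d N (i + 1) := by
  simp only [Nprime, extNprime, Nat.succ_ne_zero, if_false, Nat.add_one_le_iff]

theorem Tmat_apply (i j : Fin (d + 1)) : Tmat (d + 1) i j =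
    (if i = j then 2 else 0) - (if (i : ℕ) + 1 = j then 1 else 0) -
      if i = ⟨min ((j : ℕ) + 1) d, by lia⟩ then 1 else 0 := by
  simp only [Tmat, Fin.ext_iff]
  split_ifs <;> lia

theorem Lvec_eq_extNprime (N : Fin (d + 2) → ℤ) (j : Fin (d + 1)) :
    Lvec d N j = 2 * extNprime d N (j + 1) - extNprime d N j - extNprime d N (j + 2) := by
  have hprev : ∑ i : Fin (d + 1), (if (i : ℕ) + 1 = j then Nprime d N i else 0) =
      extNprime d N j := by
    cases j using Fin.cases with
    | zero => simp [extNprime]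
    | succ j =>
      simp_rw [Fin.val_succ, Nat.add_right_cancel_iff, ← Fin.val_castSucc j, ← Fin.ext_iff]
      simp [Nprime_eq_extNprime]
  have hnext : extNprime d N (min ((j : ℕ) + 1) d + 1) = extNprime d N (j + 2) := by
    rcases le_or_gt d j with h | h
    · rw [extNprime_of_lt N (by lia), extNprime_of_lt N (by lia)]
    · rw [min_eq_left (by lia)]
  simp only [Lvec, Tmat_apply, mul_sub, mul_ite, mul_one, mul_zero, Finset.sum_sub_distrib, hprev,
    Finset.sum_ite_eq', Finset.mem_univ, if_true]
  rw [Nprime_eq_extNprime, Nprime_eq_extNprime, hnext]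
  ring

theorem Lvec_sub (N M : Fin (d + 2) → ℤ) : Lvec d (N - M) = Lvec d N - Lvec d M := by
  ext j
  simp only [Lvec_eq_extNprime, extNprime_sub, Pi.sub_apply]
  ring

theorem Lvec_castSucc (N : Fin (d + 2) → ℤ) (j : Fin d) :
    Lvec d N j.castSucc = 2 * N j.succ.succ - extNprime d N j - extNprime d N (j + 2) := by
  rw [Lvec_eq_extNprime, Fin.val_castSucc, extNprime_succ]

theorem Lvec_last (N : Fin (d + 2) → ℤ) : Lvec d N (Fin.last d) = N 0 + N 1 - extNprime d N d := by
  rw [Lvec_eq_extNprime, Fin.val_last, extNprime_of_lt N (Nat.lt_add_one d),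
    extNprime_of_lt N (by lia : d < d + 2)]
  ring

theorem sum_range_mul_second_difference (P : ℕ → ℤ) (n : ℕ) :
    ∑ c ∈ Finset.range n, ((c : ℤ) + 1) * (2 * P (c + 1) - P c - P (c + 2)) =
      (n + 1) * P n - n * P (n + 1) - P 0 := by
  induction n with
  | zero => simp
  | succ n ih =>
    rw [Finset.sum_range_succ, ih]
    push_cast
    ring

theorem weight_Lvec (N : Fin (d + 2) → ℤ) : weight (Lvec d N) = N 0 + N 1 := by
  simp only [weight, Lvec_eq_extNprime]
  rw [Fin.sum_univ_eq_sum_range fun c : ℕ => ((c : ℤ) + 1) *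
      (2 * extNprime d N (c + 1) - extNprime d N c - extNprime d N (c + 2)),
    sum_range_mul_second_difference, extNprime_of_lt N (by lia), extNprime_of_lt N (by lia),
    extNprime_zero]
  push_cast
  ring

theorem extNprime_single_zero (d c : ℕ) :
    extNprime d (Pi.single 0 1) c = if d < c then 1 else 0 := by
  simp only [extNprime, Pi.single_apply, Fin.ext_iff, Fin.val_zero, Fin.val_one, Nat.succ_ne_zero]
  split_ifs <;> lia

theorem Lvec_single_zero (d : ℕ) :
    Lvec d (Pi.single 0 1) = unitVec (d + 1) (d + 1) - unitVec (d + 1) d := by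
  ext j
  simp only [Lvec_eq_extNprime, extNprime_single_zero, unitVec, Pi.sub_apply]
  split_ifs <;> lia

theorem extNprime_snoc (N : Fin (d + 2) → ℤ) (c : ℕ) :
    extNprime (d + 1) (Fin.snoc N (N 0 + N 1)) c = extNprime d N c := by
  have h0 : (Fin.snoc N (N 0 + N 1) : Fin (d + 3) → ℤ) 0 = N 0 := Fin.snoc_castSucc _ _ 0
  have h1 : (Fin.snoc N (N 0 + N 1) : Fin (d + 3) → ℤ) 1 = N 1 := Fin.snoc_castSucc _ _ 1
  rcases lt_trichotomy c (d + 1) with h | rfl | h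
  · simp only [extNprime, Fin.snoc]
    rw [dif_pos (by lia), dif_pos (by lia), dif_pos (by lia)]
    rfl
  · simp [extNprime, Fin.snoc]
  · rw [extNprime_of_lt _ (by lia), extNprime_of_lt _ (by lia), h0, h1]

theorem Lvec_snoc (N : Fin (d + 2) → ℤ) :
    Lvec (d + 1) (Fin.snoc N (N 0 + N 1)) = Fin.snoc (α := fun _ => ℤ) (Lvec d N) 0 := by
  refine funext fun j => ?_
  rw [Lvec_eq_extNprime, extNprime_snoc, extNprime_snoc, extNprime_snoc]
  cases j using Fin.lastCases with
  | last =>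
    rw [Fin.val_last, extNprime_of_lt N (by lia), extNprime_of_lt N (by lia),
      extNprime_of_lt N (by lia), Fin.snoc_last]
    ring
  | cast j => rw [Fin.snoc_castSucc, Lvec_eq_extNprime, Fin.val_castSucc]

theorem extNprime_rowA (p : ℕ) (n : Fin (d + 2) → ℤ) (c : ℕ) :
    extNprime d (rowA p d n) c = ∑ k, n k * extNprime d (Amat p d k) c := by
  simp only [extNprime, rowA]
  split_ifs
  · simp
  · rfl
  · simp only [mul_add, Finset.sum_add_distrib]

theorem Lvec_rowA (p : ℕ) (n : Fin (d + 2) → ℤ) (j : Fin (d + 1)) :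
    Lvec d (rowA p d n) j = ∑ k, n k * Lvec d (Amat p d k) j := by
  simp only [Lvec_eq_extNprime, extNprime_rowA, mul_sub, Finset.sum_sub_distrib, Finset.mul_sum,
    mul_left_comm]

theorem extNprime_Amat (p : ℕ) (k : Fin (d + 2)) (c : ℕ) : extNprime d (Amat p d k) c =
    if (k : ℕ) ≤ 1 then (min c (d + 1) : ℤ) else 2 * min ((k : ℤ) - 1) c := by
  simp only [extNprime, Amat, Fin.val_zero, Fin.val_one]
  split_ifs <;> lia

theorem Lvec_Amat_castSucc (p : ℕ) (k : Fin (d + 2)) (j : Fin d) :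
    Lvec d (Amat p d k) j.castSucc = if k = j.succ.succ then 2 else 0 := by
  simp only [Lvec_eq_extNprime, extNprime_Amat, Fin.val_castSucc, Fin.ext_iff, Fin.val_succ]
  split_ifs <;> lia

theorem Lvec_Amat_last (p : ℕ) (k : Fin (d + 2)) :
    Lvec d (Amat p d k) (Fin.last d) = if (k : ℕ) ≤ 1 then 1 else 0 := by
  simp only [Lvec_eq_extNprime, extNprime_Amat, Fin.val_last]
  split_ifs <;> lia

theorem Lvec_rowA_castSucc (p : ℕ) (n : Fin (d + 2) → ℤ) (j : Fin d) :
    Lvec d (rowA p d n) j.castSucc = 2 * n j.succ.succ := by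
  simp only [Lvec_rowA, Lvec_Amat_castSucc, mul_ite, mul_zero, Finset.sum_ite_eq', Finset.mem_univ,
    if_true, mul_comm]

theorem Lvec_rowA_last (p : ℕ) (n : Fin (d + 2) → ℤ) :
    Lvec d (rowA p d n) (Fin.last d) = n 0 + n 1 := by
  simp [Lvec_rowA, Lvec_Amat_last, Fin.sum_univ_succ]

theorem rowA_zero_add_rowA_one (p : ℕ) (n : Fin (d + 2) → ℤ) :
    rowA p d n 0 + rowA p d n 1 =
      (d + 1) * (n 0 + n 1) + 2 * ∑ j : Fin d, ((j : ℤ) + 1) * n j.succ.succ := by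
  rw [← weight_Lvec, weight_succ, Lvec_rowA_last, add_comm, weight, Finset.mul_sum]
  congr 1
  refine Finset.sum_congr rfl fun j _ => ?_
  rw [Fin.init, Lvec_rowA_castSucc, mul_left_comm]

theorem rowA_zero_sub_rowA_one (p : ℕ) (n : Fin (d + 2) → ℤ) :
    rowA p d n 0 - rowA p d n 1 = (2 * p - d - 1) * (n 0 - n 1) := by
  have hAmat (k : Fin (d + 2)) : Amat p d k 0 - Amat p d k 1 =
      (2 * p - d - 1) * ((if k = 0 then 1 else 0) - if k = 1 then 1 else 0) := by
    simp only [Amat, Fin.ext_iff, Fin.val_zero, Fin.val_one]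
    split_ifs <;> lia
  simp only [rowA, ← Finset.sum_sub_distrib, ← mul_sub, hAmat, mul_left_comm (n _),
    ← Finset.mul_sum]
  simp [mul_sub]

end SecondDifference

section FermionicSum

variable {p d : ℕ} {N n : Fin (d + 2) → ℤ}

/-- The quadratic form `n 𝒜 nᵀ`. -/
def quadForm (p d : ℕ) (n : Fin (d + 2) → ℤ) : ℤ := ∑ i, ∑ j, n i * Amat p d i j * n j

/-- The summand at `n` of the left-hand side of the main identity. -/
def fermionicTerm (p d : ℕ) (N n : Fin (d + 2) → ℤ) : LL :=
  Zv (n 0 - n 1) * Qh (quadForm p d n) *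
    ∏ a, qbinPlusL (N a + n a - rowA p d n a) (n a)

/-- The left-hand side of the main identity. -/
def fermionicSum (p d : ℕ) (N : Fin (d + 2) → ℤ) : LL := ∑ᶠ n, fermionicTerm p d N n

/-- The conditions on `n` under which none of the binomials `[e_a·(N + n − n𝒜), n_a]⁺` vanishes. -/
def IsAdmissible (p d : ℕ) (N n : Fin (d + 2) → ℤ) : Prop :=
  ∀ a, 0 ≤ (N - rowA p d n) a ∧ (0 ≤ n a ∨ (N - rowA p d n) a + n a < 0)

theorem isAdmissible_of_fermionicTerm_ne_zero (h : fermionicTerm p d N n ≠ 0) :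
    IsAdmissible p d N n := by
  intro a
  have hfactor : qbinPlusL (N a + n a - rowA p d n a) (n a) ≠ 0 := fun hzero =>
    right_ne_zero_of_mul h (Finset.prod_eq_zero (Finset.mem_univ a) hzero)
  have := le_and_nonneg_or_neg_of_qbinPlusL_ne_zero hfactor
  rw [Pi.sub_apply]
  lia

namespace IsAdmissible

theorem extNprime_nonneg (h : IsAdmissible p d N n) (c : ℕ) :
    0 ≤ extNprime d (N - rowA p d n) c :=
  _root_.extNprime_nonneg (fun a => (h a).1) c

theorem nonneg_succ_succ (h : IsAdmissible p d N n) (hL : ∀ j, 0 ≤ Lvec d N j) (j : Fin d) :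
    0 ≤ n j.succ.succ := by
  have hcurvature := Lvec_castSucc (N - rowA p d n) j
  rw [Lvec_sub, Pi.sub_apply, Lvec_rowA_castSucc] at hcurvature
  have := h j.succ.succ
  have := hL j.castSucc
  have := h.extNprime_nonneg j
  have := h.extNprime_nonneg (j + 2)
  lia

theorem zero_nonneg_or_one_nonneg (h : IsAdmissible p d N n) (hL : ∀ j, 0 ≤ Lvec d N j) :
    0 ≤ n 0 ∨ 0 ≤ n 1 := by
  have hslope := Lvec_last (N - rowA p d n)
  rw [Lvec_sub, Pi.sub_apply, Lvec_rowA_last] at hslope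
  have := h 0
  have := h 1
  have := hL (Fin.last d)
  have := h.extNprime_nonneg d
  lia

theorem min_le_zero_and_min_le_one (h : IsAdmissible p d N n) (hd : d < 2 * p - 2)
    (hL : ∀ j, 0 ≤ Lvec d N j) :
    min 0 (2 * N 0 - extNprime d N d) ≤ n 0 ∧ min 0 (2 * N 1 - extNprime d N d) ≤ n 1 := by
  have hslope := Lvec_last (N - rowA p d n)
  rw [Lvec_sub, Pi.sub_apply, Lvec_rowA_last, Lvec_last] at hslope
  have hdiff := rowA_zero_sub_rowA_one p n
  have hcoeff : (2 : ℤ) ≤ 2 * p - d - 1 := by lia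
  have := h 0
  have := h 1
  have := h.extNprime_nonneg d
  have := h.zero_nonneg_or_one_nonneg hL
  simp only [Pi.sub_apply] at *
  constructor
  · rcases le_or_gt 0 (n 0) with h0 | h0
    · lia
    · have : (2 * p - d - 1) * (n 0 - n 1) ≤ 2 * (n 0 - n 1) :=
        mul_le_mul_of_nonpos_right hcoeff (by lia)
      lia
  · rcases le_or_gt 0 (n 1) with h1 | h1
    · lia
    · have : 2 * (n 0 - n 1) ≤ (2 * p - d - 1) * (n 0 - n 1) :=
        mul_le_mul_of_nonneg_right hcoeff (by lia)
      lia

theorem le_of_le (h : IsAdmissible p d N n) (hL : ∀ j, 0 ≤ Lvec d N j) {b : ℤ}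
    (hb : b ≤ 0) (h0 : b ≤ n 0) (h1 : b ≤ n 1) (a : Fin (d + 2)) :
    n a ≤ N 0 + N 1 - (2 * d + 3) * b := by
  have hsum := rowA_zero_add_rowA_one p n
  have := (h 0).1
  have := (h 1).1
  simp only [Pi.sub_apply] at *
  have hterm (j : Fin d) : 0 ≤ ((j : ℤ) + 1) * n j.succ.succ :=
    mul_nonneg (by lia) (h.nonneg_succ_succ hL j)
  have htail := Finset.sum_nonneg fun j (_ : j ∈ Finset.univ) => hterm j
  cases a using Fin.cases with
  | zero => nlinarith
  | succ a =>
    cases a using Fin.cases with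
    | zero => rw [Fin.succ_zero_eq_one]; nlinarith
    | succ j =>
      have hj := Finset.single_le_sum (fun j _ => hterm j) (Finset.mem_univ j)
      have := h.nonneg_succ_succ hL j
      nlinarith

end IsAdmissible

theorem hasFiniteSupport_fermionicTerm (hd : d < 2 * p - 2) (hL : ∀ j, 0 ≤ Lvec d N j) :
    (fermionicTerm p d N).HasFiniteSupport := by
  set b := min (min 0 (2 * N 0 - extNprime d N d)) (min 0 (2 * N 1 - extNprime d N d))
  refine (Set.finite_Icc (fun _ => b) fun _ => N 0 + N 1 - (2 * d + 3) * b).subset fun n hn => ?_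
  have hadm := isAdmissible_of_fermionicTerm_ne_zero hn
  obtain ⟨h0, h1⟩ := hadm.min_le_zero_and_min_le_one hd hL
  refine ⟨fun a => ?_, hadm.le_of_le hL (by lia) (by lia) (by lia)⟩
  cases a using Fin.cases with
  | zero => lia
  | succ a =>
    cases a using Fin.cases with
    | zero => rw [Fin.succ_zero_eq_one]; lia
    | succ j => have := hadm.nonneg_succ_succ hL j; lia

theorem Amat_comm (p : ℕ) (i j : Fin (d + 2)) : Amat p d i j = Amat p d j i := by
  simp only [Amat]
  split_ifs <;> lia

theorem rowA_add (p : ℕ) (n m : Fin (d + 2) → ℤ) : rowA p d (n + m) = rowA p d n + rowA p d m :=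
  Matrix.add_vecMul _ _ _

theorem rowA_single (p : ℕ) (a : Fin (d + 2)) : rowA p d (Pi.single a 1) = Amat p d a :=
  Matrix.single_one_vecMul _ _

theorem quadForm_eq_sum_mul_rowA (p : ℕ) (n : Fin (d + 2) → ℤ) :
    quadForm p d n = ∑ a, n a * rowA p d n a := by
  simp only [quadForm, rowA, Finset.mul_sum]
  rw [Finset.sum_comm]
  exact Finset.sum_congr rfl fun _ _ => Finset.sum_congr rfl fun _ _ => by ring

theorem quadForm_add_single (p : ℕ) (n : Fin (d + 2) → ℤ) (a : Fin (d + 2)) :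
    quadForm p d (n + Pi.single a 1) = quadForm p d n + 2 * rowA p d n a + Amat p d a a := by
  have hsymm : ∑ b, n b * Amat p d a b = rowA p d n a := by
    simp only [rowA, Amat_comm p a]
  simp only [quadForm_eq_sum_mul_rowA, rowA_add, rowA_single, Pi.add_apply, add_mul, mul_add,
    Finset.sum_add_distrib, hsymm, Pi.single_apply, ite_mul, one_mul, zero_mul, Finset.sum_ite_eq',
    Finset.mem_univ, if_true]
  ring

theorem fermionicTerm_eq_add (p : ℕ) (N n : Fin (d + 2) → ℤ) :
    fermionicTerm p d N n = fermionicTerm p d (N - Pi.single 0 1) n +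
      Zv 1 * Qh (2 * N 0 - p) * fermionicTerm p d (N - Amat p d 0) (n - Pi.single 0 1) := by
  obtain ⟨m, rfl⟩ : ∃ m, n = m + Pi.single 0 1 := ⟨n - _, (sub_add_cancel n _).symm⟩
  have hzero : Amat p d 0 0 = p := rfl
  have hmonomial : Zv (m 0 + 1 - m 1) *
      (Qh (quadForm p d (m + Pi.single 0 1)) * Qh (2 * (N 0 - (rowA p d m 0 + p)))) =
        Zv 1 * Zv (m 0 - m 1) * (Qh (2 * N 0 - p) * Qh (quadForm p d m)) := by
    rw [← Zv_add, ← Qh_add, ← Qh_add, quadForm_add_single, hzero]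
    congr 2 <;> ring
  simp only [fermionicTerm, Fin.prod_univ_succ (n := d + 1), Pi.add_apply, Pi.sub_apply, rowA_add,
    rowA_single, Pi.single_eq_same, hzero, Pi.single_eq_of_ne (Fin.succ_ne_zero _), add_zero,
    sub_zero, Pi.single_eq_of_ne one_ne_zero, add_sub_cancel_right]
  have htop : N 0 + (m 0 + 1) - (rowA p d m 0 + p) - 1 = N 0 - p + m 0 - rowA p d m 0 := by ring
  have htop' : N 0 - 1 + (m 0 + 1) - (rowA p d m 0 + p) = N 0 - p + m 0 - rowA p d m 0 := by ring
  have hexponent : N 0 + (m 0 + 1) - (rowA p d m 0 + p) - (m 0 + 1) =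
      N 0 - (rowA p d m 0 + p) := by ring
  have hprod (i : Fin (d + 1)) : N i.succ - Amat p d 0 i.succ + m i.succ - rowA p d m i.succ =
      N i.succ + m i.succ - (rowA p d m i.succ + Amat p d 0 i.succ) := by ring
  rw [qbinPlusL_eq_add_mul, htop, htop', hexponent, add_sub_cancel_right]
  simp only [hprod]
  linear_combination (qbinPlusL (N 0 - p + m 0 - rowA p d m 0) (m 0) *
    ∏ i : Fin (d + 1), qbinPlusL (N i.succ + m i.succ - (rowA p d m i.succ + Amat p d 0 i.succ))
      (m i.succ)) * hmonomial

theorem fermionicSum_eq_add {p : ℕ} {N : Fin (d + 2) → ℤ}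
    (hsingle : (fermionicTerm p d (N - Pi.single 0 1)).HasFiniteSupport)
    (hAmat : (fermionicTerm p d (N - Amat p d 0)).HasFiniteSupport) :
    fermionicSum p d N = fermionicSum p d (N - Pi.single 0 1) +
      Zv 1 * Qh (2 * N 0 - p) * fermionicSum p d (N - Amat p d 0) := by
  have hinj := sub_left_injective (b := (Pi.single 0 1 : Fin (d + 2) → ℤ))
  rw [fermionicSum, finsum_congr (fermionicTerm_eq_add p N),
    finsum_add_distrib (by fun_prop) (by fun_prop), ← mul_finsum, fermionicSum, fermionicSum]
  congr 2
  exact finsum_comp_equiv (Equiv.subRight (Pi.single 0 1))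

/-- The change of variables `n_± ↦ n_± − k`, followed by adjoining `k` as a last coordinate. -/
def linkingEquiv (d : ℕ) : (Fin (d + 2) → ℤ) × ℤ ≃ (Fin (d + 3) → ℤ) where
  toFun x := Fin.snoc (α := fun _ => ℤ) (x.1 - x.2 • (Pi.single 0 1 + Pi.single 1 1)) x.2
  invFun n := (Fin.init n + n (Fin.last _) • (Pi.single 0 1 + Pi.single 1 1), n (Fin.last _))
  left_inv x := by simp
  right_inv n := by simp

theorem linkingEquiv_last (n : Fin (d + 2) → ℤ) (k : ℤ) :
    linkingEquiv d (n, k) (Fin.last _) = k :=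
  Fin.snoc_last (α := fun _ => ℤ) _ _

theorem linkingEquiv_castSucc (n : Fin (d + 2) → ℤ) (k : ℤ) (a : Fin (d + 2)) :
    linkingEquiv d (n, k) a.castSucc =
      n a - ((if a = 0 then k else 0) + if a = 1 then k else 0) := by
  simp [linkingEquiv, Pi.single_apply]

theorem sum_linkingEquiv_mul (n : Fin (d + 2) → ℤ) (k : ℤ) (f : Fin (d + 3) → ℤ) :
    ∑ a, linkingEquiv d (n, k) a * f a =
      ∑ a, n a * f a.castSucc + k * (f (Fin.last _) - f (Fin.castSucc 0) - f (Fin.castSucc 1)) := by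
  rw [Fin.sum_univ_castSucc]
  simp only [linkingEquiv_castSucc, linkingEquiv_last, sub_mul, add_mul, Finset.sum_sub_distrib,
    Finset.sum_add_distrib, ite_mul, zero_mul, Finset.sum_ite_eq', Finset.mem_univ, if_true]
  ring

theorem Amat_castSucc_castSucc (p : ℕ) (a b : Fin (d + 2)) :
    Amat p (d + 1) a.castSucc b.castSucc = Amat p d a b +
      ((if a = 0 then if b = 1 then 1 else 0 else 0) +
        if a = 1 then if b = 0 then 1 else 0 else 0) := by
  simp only [Amat, Fin.ext_iff, Fin.val_castSucc, Fin.val_zero, Fin.val_one]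
  split_ifs <;> lia

theorem Amat_castSucc_last (p : ℕ) (a : Fin (d + 2)) :
    Amat p (d + 1) a.castSucc (Fin.last _) = Amat p d a 0 + Amat p d a 1 := by
  simp only [Amat, Fin.val_castSucc, Fin.val_last, Fin.val_zero, Fin.val_one]
  split_ifs <;> lia

theorem Amat_last_castSucc (p : ℕ) (a : Fin (d + 2)) :
    Amat p (d + 1) (Fin.last _) a.castSucc = Amat p d 0 a + Amat p d 1 a := by
  rw [Amat_comm, Amat_castSucc_last, Amat_comm p a, Amat_comm p a]

theorem rowA_linkingEquiv_castSucc (p : ℕ) (n : Fin (d + 2) → ℤ) (k : ℤ) (a : Fin (d + 2)) :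
    rowA p (d + 1) (linkingEquiv d (n, k)) a.castSucc =
      rowA p d n a + ((if a = 1 then n 0 - k else 0) + if a = 0 then n 1 - k else 0) := by
  rw [rowA, sum_linkingEquiv_mul, Amat_last_castSucc]
  simp only [Amat_castSucc_castSucc, mul_add, Finset.sum_add_distrib, mul_ite, mul_one, mul_zero,
    Finset.sum_ite_eq', Finset.mem_univ, if_true, zero_ne_one, one_ne_zero, if_false]
  rw [rowA]
  split_ifs <;> ring

theorem rowA_linkingEquiv_last (p : ℕ) (n : Fin (d + 2) → ℤ) (k : ℤ) :
    rowA p (d + 1) (linkingEquiv d (n, k)) (Fin.last _) = rowA p d n 0 + rowA p d n 1 := by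
  have hlast : Amat p d 0 0 + Amat p d 0 1 + (Amat p d 1 0 + Amat p d 1 1) =
      Amat p (d + 1) (Fin.last _) (Fin.last _) := by
    simp only [Amat, Fin.val_last, Fin.val_zero, Fin.val_one]
    split_ifs <;> lia
  rw [rowA, sum_linkingEquiv_mul, ← hlast]
  simp only [Amat_castSucc_last, mul_add, Finset.sum_add_distrib, rowA]
  ring

theorem quadForm_linkingEquiv (p : ℕ) (n : Fin (d + 2) → ℤ) (k : ℤ) :
    quadForm p (d + 1) (linkingEquiv d (n, k)) = quadForm p d n + 2 * ((n 0 - k) * (n 1 - k)) := by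
  rw [quadForm_eq_sum_mul_rowA, sum_linkingEquiv_mul, rowA_linkingEquiv_last,
    quadForm_eq_sum_mul_rowA]
  simp only [rowA_linkingEquiv_castSucc, mul_add, Finset.sum_add_distrib, mul_ite, mul_zero,
    Finset.sum_ite_eq', Finset.mem_univ, if_true, zero_ne_one, one_ne_zero, if_false]
  ring

/-- The factors of the summand at `n` other than the binomials of the coordinates `±`. -/
def tailTerm (p d : ℕ) (N n : Fin (d + 2) → ℤ) : LL :=
  Zv (n 0 - n 1) * Qh (quadForm p d n) *
    ∏ j : Fin d, qbinPlusL (N j.succ.succ + n j.succ.succ - rowA p d n j.succ.succ) (n j.succ.succ)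

theorem fermionicTerm_eq_tailTerm_mul (p : ℕ) (N n : Fin (d + 2) → ℤ) :
    fermionicTerm p d N n = tailTerm p d N n * (qbinPlusL (N 0 + n 0 - rowA p d n 0) (n 0) *
      qbinPlusL (N 1 + n 1 - rowA p d n 1) (n 1)) := by
  rw [fermionicTerm, tailTerm, Fin.prod_univ_succ, Fin.prod_univ_succ, Fin.succ_zero_eq_one]
  ring

theorem fermionicTerm_snoc_linkingEquiv (p : ℕ) (N n : Fin (d + 2) → ℤ) (k : ℤ) :
    fermionicTerm p (d + 1) (Fin.snoc N (N 0 + N 1)) (linkingEquiv d (n, k)) =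
      tailTerm p d N n * linkingTerm (N 0 + n 0 - rowA p d n 0) (N 1 + n 1 - rowA p d n 1)
        (n 0) (n 1) k := by
  have h0 : linkingEquiv d (n, k) 0 = n 0 - k := by
    simpa using linkingEquiv_castSucc n k 0
  have h1 : linkingEquiv d (n, k) 1 = n 1 - k := by
    simpa using linkingEquiv_castSucc n k 1
  have hne_zero (j : Fin d) : j.succ.succ ≠ 0 := Fin.succ_ne_zero _
  have hne_one (j : Fin d) : j.succ.succ ≠ 1 := by simp [Fin.ext_iff]
  rw [fermionicTerm, Fin.prod_univ_castSucc, Fin.prod_univ_succ, Fin.prod_univ_succ, h0, h1,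
    quadForm_linkingEquiv, Qh_add, tailTerm, linkingTerm, Fin.succ_zero_eq_one]
  simp only [linkingEquiv_castSucc, linkingEquiv_last, rowA_linkingEquiv_castSucc,
    rowA_linkingEquiv_last, Fin.snoc_castSucc, Fin.snoc_last, hne_zero, hne_one, zero_ne_one,
    one_ne_zero, if_true, if_false, add_zero, zero_add, sub_zero, sub_sub_sub_cancel_right]
  rw [show N 0 + (n 0 - k) - (rowA p d n 0 + (n 1 - k)) = N 0 + n 0 - rowA p d n 0 - n 1 by ring,
    show N 1 + (n 1 - k) - (rowA p d n 1 + (n 0 - k)) = N 1 + n 1 - rowA p d n 1 - n 0 by ring,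
    show N 0 + N 1 + k - (rowA p d n 0 + rowA p d n 1) =
      N 0 + n 0 - rowA p d n 0 + (N 1 + n 1 - rowA p d n 1) - n 0 - n 1 + k by ring]
  ring

theorem fermionicSum_snoc (hd : d + 1 < 2 * p - 2) (hL : ∀ j, 0 ≤ Lvec d N j) :
    fermionicSum p (d + 1) (Fin.snoc N (N 0 + N 1)) = fermionicSum p d N := by
  have hsnoc (j : Fin (d + 2)) : 0 ≤ Lvec (d + 1) (Fin.snoc N (N 0 + N 1)) j := by
    rw [Lvec_snoc]
    cases j using Fin.lastCases with
    | last => rw [Fin.snoc_last]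
    | cast j => rw [Fin.snoc_castSucc]; exact hL j
  have hsupp := (hasFiniteSupport_fermionicTerm hd hsnoc).fun_comp_of_injective
    (linkingEquiv d).injective
  rw [fermionicSum, ← finsum_comp_equiv (linkingEquiv d), finsum_curry _ hsupp, fermionicSum]
  refine finsum_congr fun n => ?_
  rw [fermionicTerm_eq_tailTerm_mul, ← finsum_linkingTerm, mul_finsum]
  exact finsum_congr (fermionicTerm_snoc_linkingEquiv p N n)

end FermionicSum

section BosonicSum

variable {p d : ℕ} {N : Fin (d + 2) → ℤ}

/-- The summand at `a` of the right-hand side of the main identity. -/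
def bosonicTerm (p d : ℕ) (N : Fin (d + 2) → ℤ) (a : ℤ) : LL :=
  Zv a * Qh (p * a ^ 2) * qSupL (Lvec d N) (p * a + N 1)

/-- The right-hand side of the main identity. -/
def bosonicSum (p d : ℕ) (N : Fin (d + 2) → ℤ) : LL := ∑ᶠ a, bosonicTerm p d N a

theorem hasFiniteSupport_bosonicTerm (hp : p ≠ 0) (N : Fin (d + 2) → ℤ) :
    (bosonicTerm p d N).HasFiniteSupport := by
  have hinj : Function.Injective fun a : ℤ => p * a + N 1 :=
    (add_left_injective _).comp (mul_right_injective₀ (Nat.cast_ne_zero.mpr hp))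
  exact ((Set.finite_Icc 0 (weight (Lvec d N))).preimage hinj.injOn).subset fun a ha =>
    bounds_of_qSupL_ne_zero (right_ne_zero_of_mul ha)

theorem Lvec_Amat_zero (p d : ℕ) : Lvec d (Amat p d 0) = unitVec (d + 1) (d + 1) := by
  ext j
  cases j using Fin.lastCases with
  | last => simp [Lvec_Amat_last, unitVec]
  | cast j => simp [Lvec_Amat_castSucc, unitVec, j.isLt.ne, (Fin.succ_ne_zero _).symm]

theorem Lvec_eq_add (p : ℕ) (N : Fin (d + 2) → ℤ) :
    Lvec d N = Lvec d (N - Amat p d 0) + unitVec (d + 1) (d + 1) := by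
  rw [Lvec_sub, Lvec_Amat_zero, sub_add_cancel]

theorem Lvec_sub_single_zero (p : ℕ) (N : Fin (d + 2) → ℤ) :
    Lvec d (N - Pi.single 0 1) = Lvec d (N - Amat p d 0) + unitVec (d + 1) d := by
  rw [Lvec_sub, Lvec_single_zero, Lvec_eq_add p N]
  abel

theorem bosonicTerm_eq_add (hL : ∀ j, 0 ≤ Lvec d (N - Amat p d 0) j) (a : ℤ) :
    bosonicTerm p d N a = bosonicTerm p d (N - Pi.single 0 1) a +
      Zv 1 * Qh (2 * N 0 - p) * bosonicTerm p d (N - Amat p d 0) (a - 1) := by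
  have h0 : Amat p d 0 0 = p := rfl
  have h1 : Amat p d 0 1 = -p + d + 1 := rfl
  have hmonomial : Zv a * (Qh (p * a ^ 2) * Qh (2 * (N 0 + N 1 - (p * a + N 1)))) =
      Zv 1 * Zv (a - 1) * (Qh (2 * N 0 - p) * Qh (p * (a - 1) ^ 2)) := by
    rw [← Zv_add, ← Qh_add, ← Qh_add]
    congr 2 <;> ring
  simp only [bosonicTerm]
  rw [Lvec_sub_single_zero p, Lvec_eq_add p N, qSupL_add_unitVec_last hL, weight_Lvec]
  simp only [Pi.sub_apply, h0, h1, Pi.single_eq_of_ne one_ne_zero, sub_zero]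
  rw [show N 0 - p + (N 1 - (-p + d + 1)) + (d + 1) - (p * a + N 1) =
      N 0 + N 1 - (p * a + N 1) by ring,
    show p * (a - 1) + (N 1 - (-p + d + 1)) = p * a + N 1 - (d + 1) by ring]
  linear_combination qSupL (Lvec d (N - Amat p d 0)) (p * a + N 1 - (d + 1)) * hmonomial

theorem bosonicSum_eq_add (hp : p ≠ 0) (hL : ∀ j, 0 ≤ Lvec d (N - Amat p d 0) j) :
    bosonicSum p d N = bosonicSum p d (N - Pi.single 0 1) +
      Zv 1 * Qh (2 * N 0 - p) * bosonicSum p d (N - Amat p d 0) := by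
  have hsupp (M : Fin (d + 2) → ℤ) := hasFiniteSupport_bosonicTerm hp M
  have hinj := sub_left_injective (b := (1 : ℤ))
  rw [bosonicSum, finsum_congr (bosonicTerm_eq_add hL),
    finsum_add_distrib (by fun_prop) (by fun_prop), ← mul_finsum, bosonicSum, bosonicSum]
  congr 2
  exact finsum_comp_equiv (Equiv.subRight 1)

theorem bosonicSum_snoc (p : ℕ) (N : Fin (d + 2) → ℤ) :
    bosonicSum p (d + 1) (Fin.snoc N (N 0 + N 1)) = bosonicSum p d N := by
  have h1 : (Fin.snoc N (N 0 + N 1) : Fin (d + 3) → ℤ) 1 = N 1 := Fin.snoc_castSucc _ _ 1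
  refine finsum_congr fun a => ?_
  rw [bosonicTerm, Lvec_snoc, qSupL_of_last_eq_zero (Fin.snoc_last _ _), Fin.init_snoc, h1,
    bosonicTerm]

end BosonicSum

section MainIdentity

/-- The change of variables `(a, b) ↦ (n_+, n_-) = (a + b, b)`. -/
def vandermondeEquiv : ℤ × ℤ ≃ (Fin 2 → ℤ) where
  toFun x := ![x.1 + x.2, x.2]
  invFun n := (n 0 - n 1, n 1)
  left_inv x := by simp
  right_inv n := by ext i; fin_cases i <;> simp

theorem fermionicTerm_vandermondeEquiv (p : ℕ) (N : Fin 2 → ℤ) (a b : ℤ) :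
    fermionicTerm p 0 N (vandermondeEquiv (a, b)) = Zv a * Qh (p * a ^ 2) *
      (Qh (2 * (b * (b + a))) * qbinPlusL (N 0 + a - p * a) (b + a) *
        qbinPlusL (N 1 - a + p * a) b) := by
  have h0 : vandermondeEquiv (a, b) 0 = a + b := rfl
  have h1 : vandermondeEquiv (a, b) 1 = b := rfl
  have hrow0 : rowA p 0 (vandermondeEquiv (a, b)) 0 = p * a + b := calc
    _ = (a + b) * p + b * (-p + (0 : ℕ) + 1) := Fin.sum_univ_two _
    _ = p * a + b := by ring
  have hrow1 : rowA p 0 (vandermondeEquiv (a, b)) 1 = a + b - p * a := calc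
    _ = (a + b) * (-p + (0 : ℕ) + 1) + b * p := Fin.sum_univ_two _
    _ = a + b - p * a := by ring
  have hquad : quadForm p 0 (vandermondeEquiv (a, b)) = p * a ^ 2 + 2 * (b * (b + a)) := by
    rw [quadForm_eq_sum_mul_rowA, Fin.sum_univ_two, hrow0, hrow1, h0, h1]
    ring
  rw [fermionicTerm, Fin.prod_univ_two, hquad, Qh_add, hrow0, hrow1, h0, h1,
    add_sub_cancel_right, show N 0 + (a + b) - (p * a + b) = N 0 + a - p * a by ring,
    show N 1 + b - (a + b - p * a) = N 1 - a + p * a by ring, add_comm a b]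
  ring

theorem fermionicSum_zero_eq_bosonicSum {p : ℕ} (hp : 0 < 2 * p - 2) {N : Fin 2 → ℤ}
    (hL : ∀ j, 0 ≤ Lvec 0 N j) : fermionicSum p 0 N = bosonicSum p 0 N := by
  have hlast : Lvec 0 N 0 = N 0 + N 1 := (Lvec_last N).trans (sub_zero _)
  have hN : 0 ≤ N 0 + N 1 := hlast ▸ hL 0
  have hsupp := (hasFiniteSupport_fermionicTerm hp hL).fun_comp_of_injective
    vandermondeEquiv.injective
  rw [fermionicSum, ← finsum_comp_equiv vandermondeEquiv, finsum_curry _ hsupp, bosonicSum]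
  refine finsum_congr fun a => ?_
  rw [finsum_congr (fermionicTerm_vandermondeEquiv p N a), ← mul_finsum,
    finsum_qbinPlusL_add_mul_qbinPlusL (by lia), bosonicTerm, qSupL_one, hlast,
    qbinPlusL_eq_qbinL (by lia)]
  congr 2 <;> ring

theorem exists_eq_snoc_of_Lvec_last_eq_zero {d : ℕ} {N : Fin (d + 3) → ℤ}
    (h : Lvec (d + 1) N (Fin.last _) = 0) :
    ∃ M : Fin (d + 2) → ℤ, N = Fin.snoc M (M 0 + M 1) := by
  have hlast : N (Fin.last _) = N 0 + N 1 := by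
    rw [Lvec_last] at h
    exact (extNprime_succ N (Fin.last d)).symm.trans (sub_eq_zero.mp h).symm
  exact ⟨Fin.init N, (Fin.snoc_init_self N).symm.trans
    (congrArg (Fin.snoc (α := fun _ => ℤ) (Fin.init N)) hlast)⟩

theorem fermionicSum_eq_bosonicSum {p d : ℕ} (hd : d < 2 * p - 2) {N : Fin (d + 2) → ℤ}
    (hL : ∀ j, 0 ≤ Lvec d N j) : fermionicSum p d N = bosonicSum p d N := by
  induction d with
  | zero => exact fermionicSum_zero_eq_bosonicSum hd hL
  | succ d ih =>
    obtain ⟨t, ht⟩ := Int.eq_ofNat_of_zero_le (hL (Fin.last _))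
    induction t generalizing N with
    | zero =>
      obtain ⟨M, rfl⟩ := exists_eq_snoc_of_Lvec_last_eq_zero ht
      have hM (j : Fin (d + 1)) : 0 ≤ Lvec d M j := by
        simpa [Lvec_snoc] using hL j.castSucc
      rw [fermionicSum_snoc hd hM, bosonicSum_snoc, ih (by lia) hM]
    | succ t iht =>
      have hAmat_last : Lvec (d + 1) (N - Amat p (d + 1) 0) (Fin.last _) = t := by
        simp [Lvec_sub, Lvec_Amat_zero, unitVec, ht]
      have hAmat (j : Fin (d + 2)) : 0 ≤ Lvec (d + 1) (N - Amat p (d + 1) 0) j := by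
        cases j using Fin.lastCases with
        | last => exact hAmat_last ▸ t.cast_nonneg
        | cast j => simpa [Lvec_sub, Lvec_Amat_zero, unitVec, j.isLt.ne] using hL j.castSucc
      have hsingle_last : Lvec (d + 1) (N - Pi.single 0 1) (Fin.last _) = t := by
        simp [Lvec_sub_single_zero p, hAmat_last, unitVec]
      have hsingle (j : Fin (d + 2)) : 0 ≤ Lvec (d + 1) (N - Pi.single 0 1) j := by
        rw [Lvec_sub_single_zero p]
        exact add_nonneg (hAmat j) (unitVec_nonneg _ j)
      rw [fermionicSum_eq_add (hasFiniteSupport_fermionicTerm hd hsingle)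
          (hasFiniteSupport_fermionicTerm hd hAmat), bosonicSum_eq_add (by lia) hAmat,
        iht hsingle hsingle_last, iht hAmat hAmat_last]

end MainIdentity

/-- the main identity
`Σ_{n ∈ ℤ^{d+2}} z^{n_+ - n_-} q^{(1/2) n 𝒜 nᵀ} Π_a [e_a·(N + n − n𝒜), e_a·n]⁺_q
  = Σ_{a ∈ ℤ} z^a q^{p a²/2} S^{(d+2)}(L, pa + N_−)_q`,
including well-definedness (finite support) of both sides. -/
theorem main_identity (p d : ℕ) (hp : 2 ≤ p) (hd : d < 2 * p - 2)
    (N : Fin (d + 2) → ℤ) (hL : ∀ j, 0 ≤ Lvec d N j) :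
    (Function.support (fun n : Fin (d + 2) → ℤ =>
        Zv (n 0 - n 1) * Qh (∑ i, ∑ j, n i * Amat p d i j * n j) *
          ∏ a, qbinPlusL (N a + n a - rowA p d n a) (n a))).Finite ∧
    (Function.support (fun a : ℤ =>
        Zv a * Qh ((p : ℤ) * a ^ 2) * qSupL (Lvec d N) ((p : ℤ) * a + N 1))).Finite ∧
    (∑ᶠ n : Fin (d + 2) → ℤ,
        Zv (n 0 - n 1) * Qh (∑ i, ∑ j, n i * Amat p d i j * n j) *
          ∏ a, qbinPlusL (N a + n a - rowA p d n a) (n a)) =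
      ∑ᶠ a : ℤ, Zv a * Qh ((p : ℤ) * a ^ 2) * qSupL (Lvec d N) ((p : ℤ) * a + N 1) := by
  exact ⟨hasFiniteSupport_fermionicTerm hd hL, hasFiniteSupport_bosonicTerm (by lia) N,
    fermionicSum_eq_bosonicSum hd hL⟩

end
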